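/- arXiv:2005.11193 — 2 statements merged into one kernel-verified Lean document; each statement's English description precedes it below -/
import Mathlib

section
/- Let Ω ⊂ ℝ² be a compact convex set of positive measure, let T = {x ∈ ℝ² : |x| = r} be a circle of radius r > 0, and let V = {v_k} ⊂ ℝ² be a uniformly discrete set. Then the union of translated circles P = V + T = ⋃_k (v_k + T) is a sampling set for B_Ω if and only if D⁻(V) > 0. -/
open MeasureTheory FourierTransform Filter Metric
open scoped Pointwise RealInnerProductSpace ENNReal NNReal

noncomputable section

variable {V : Type*} [NormedAddCommGroup V] [InnerProductSpace ℝ V]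
  [FiniteDimensional ℝ V] [MeasurableSpace V] [BorelSpace V]

/-- `f` belongs to the Bernstein space `B_Ω`: it is a continuous bounded function which is the
inverse Fourier transform of a tempered distribution supported in `Ω`, i.e. its distributional
Fourier transform annihilates every test function whose support is disjoint from `Ω`. -/
def MemBernstein (Ω : Set V) (f : V → ℂ) : Prop :=
  Continuous f ∧ (∃ C, ∀ x, ‖f x‖ ≤ C) ∧
    ∀ ψ : V → ℂ, ContDiff ℝ (⊤ : ℕ∞) ψ → HasCompactSupport ψ → tsupport ψ ∩ Ω = ∅ →
      ∫ x, f x * 𝓕 ψ x = 0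

/-- `P` is a sampling set for the Bernstein space `B_Ω`:
`‖f‖_∞ ≤ C · sup_{x ∈ P} ‖f x‖` for all `f ∈ B_Ω`. -/
def IsSamplingSet (Ω P : Set V) : Prop :=
  ∃ C > 0, ∀ f : V → ℂ, MemBernstein Ω f →
    ∀ x : V, ‖f x‖ ≤ C * sSup ((fun p => ‖f p‖) '' P)

/-- A set is uniformly discrete if distinct points are separated by a fixed positive distance. -/
def UniformlyDiscrete {X : Type*} [PseudoMetricSpace X] (Λ : Set X) : Prop :=
  ∃ δ > 0, ∀ x ∈ Λ, ∀ y ∈ Λ, x ≠ y → δ ≤ dist x y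

/-- The lower uniform (Beurling) density of a set:
`D⁻(Λ) = lim_{r→∞} inf_x #(Λ ∩ B_r(x)) / |B_r(x)|`. -/
def lowerUniformDensity {X : Type*} [NormedAddCommGroup X] [MeasureSpace X] (Λ : Set X) : ℝ :=
  liminf (fun r : ℝ => ⨅ x : X,
    (Nat.card ↥(Λ ∩ closedBall x r) : ℝ) / (volume (closedBall x r)).toReal) atTop

theorem Differentiable.exists_eq_prod_sub_mul {G : ℂ → ℂ} (hG : Differentiable ℂ G)
    (S : Finset ℂ) (hS : ∀ a ∈ S, G a = 0) :
    ∃ H : ℂ → ℂ, Differentiable ℂ H ∧ ∀ z, G z = (∏ a ∈ S, (z - a)) * H z := by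
  induction S using Finset.induction_on with
  | empty => exact ⟨G, hG, by simp⟩
  | insert b S hb ih =>
    obtain ⟨H, hH, hGH⟩ := ih fun a ha => hS a (Finset.mem_insert_of_mem ha)
    have hHb : H b = 0 := by
      have h := hS b (Finset.mem_insert_self b S)
      rw [hGH b] at h
      refine (mul_eq_zero.1 h).resolve_left (Finset.prod_ne_zero_iff.2 fun a ha hab => ?_)
      exact hb (by rwa [sub_eq_zero.1 hab])
    refine ⟨dslope H b, ?_, fun z => ?_⟩
    · rw [← differentiableOn_univ, Complex.differentiableOn_dslope Filter.univ_mem,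
        differentiableOn_univ]
      exact hH
    · have := sub_smul_dslope H b z
      rw [hHb, sub_zero, smul_eq_mul] at this
      rw [hGH z, Finset.prod_insert hb, ← this]
      ring

/-- A Jensen type bound: an entire function with many zeros near the origin is small there. -/
theorem norm_apply_zero_le_of_zeros {G : ℂ → ℂ} (hG : Differentiable ℂ G) {R M : ℝ} (hR : 0 < R)
    (hM : ∀ z, ‖z‖ ≤ 3 * R → ‖G z‖ ≤ M) (S : Finset ℂ) (hS : ∀ a ∈ S, G a = 0)
    (hSR : ∀ a ∈ S, ‖a‖ ≤ R) : ‖G 0‖ ≤ M * (1 / 2) ^ S.card := by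
  obtain ⟨H, hH, hGH⟩ := hG.exists_eq_prod_sub_mul S hS
  have h0 : ‖H 0‖ ≤ M / (2 * R) ^ S.card := by
    refine Complex.norm_le_of_forall_mem_frontier_norm_le (U := ball (0 : ℂ) (3 * R))
      isBounded_ball hH.diffContOnCl (fun z hz => ?_)
      (subset_closure (mem_ball_self (by positivity)))
    rw [frontier_ball _ (by positivity), mem_sphere_zero_iff_norm] at hz
    have h1 := hM z hz.le
    rw [hGH z, norm_mul, norm_prod] at h1
    have h2 : (2 * R) ^ S.card ≤ ∏ a ∈ S, ‖z - a‖ := by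
      rw [← Finset.prod_const]
      refine Finset.prod_le_prod (fun _ _ => by positivity) fun a ha => ?_
      have := norm_sub_norm_le z a
      have := hSR a ha
      linarith
    rw [le_div_iff₀ (by positivity), mul_comm]
    exact (mul_le_mul_of_nonneg_right h2 (norm_nonneg _)).trans h1
  have h3 : ∏ a ∈ S, ‖(0 : ℂ) - a‖ ≤ R ^ S.card := by
    rw [← Finset.prod_const]
    exact Finset.prod_le_prod (fun _ _ => norm_nonneg _) fun a ha => by simpa using hSR a ha
  have hM0 : 0 ≤ M := (norm_nonneg _).trans (hM 0 (by simp; positivity))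
  calc ‖G 0‖ = (∏ a ∈ S, ‖(0 : ℂ) - a‖) * ‖H 0‖ := by rw [hGH 0, norm_mul, norm_prod]
    _ ≤ R ^ S.card * (M / (2 * R) ^ S.card) := by gcongr
    _ = M * (1 / 2) ^ S.card := by
      rw [mul_pow, div_pow, one_pow]
      field_simp

/-- Functions of two complex variables, holomorphic along every holomorphic curve, of exponential
type `A` and bounded by `C` on `ℝ²`. -/
def IsExpType (A C : ℝ) (F : ℂ → ℂ → ℂ) : Prop :=
  (∀ g h : ℂ → ℂ, Differentiable ℂ g → Differentiable ℂ h →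
    Differentiable ℂ fun w => F (g w) (h w)) ∧
  ∀ z w, ‖F z w‖ ≤ C * Real.exp (A * (|z.im| + |w.im|))

theorem IsExpType.eq_zero_of_circles {A C : ℝ} (hA : 0 ≤ A) (hC : 0 ≤ C) {F : ℂ → ℂ → ℂ}
    (hF : IsExpType A C F) {r R₀ L : ℝ} (hr : 0 < r) (hR₀ : 0 < R₀) (hL : 3 * R₀ + 3 * r ≤ L)
    (a b : ℕ → ℕ → ℝ) (ha : ∀ j k, |a j k - L * j| ≤ R₀)
    (hb : ∀ j k, |b j k - L * (k + 1)| ≤ R₀)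
    (hab : ∀ j k (θ : ℝ), F (a j k + r * Real.cos θ) (b j k + r * Real.sin θ) = 0) :
    F 0 0 = 0 := by
  have hLpos : 0 < L := by linarith
  have hcx : ∀ j k (θ : ℂ), F (a j k + r * Complex.cos θ) (b j k + r * Complex.sin θ) = 0 := by
    intro j k θ
    have hd : Differentiable ℂ
        fun θ => F (a j k + r * Complex.cos θ) (b j k + r * Complex.sin θ) := by
      refine hF.1 _ _ ?_ ?_ <;> fun_prop
    have hz : (fun θ => F (a j k + r * Complex.cos θ) (b j k + r * Complex.sin θ)) = 0 := by
      refine AnalyticOnNhd.eq_of_frequently_eq (z₀ := 0) (f := fun θ =>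
        F (a j k + r * Complex.cos θ) (b j k + r * Complex.sin θ)) (g := 0)
        (fun x _ => hd.analyticAt x) (fun x _ => analyticAt_const) ?_
      have ht : Tendsto (fun x : ℝ => (x : ℂ)) (nhdsWithin 0 {0}ᶜ) (nhdsWithin 0 {0}ᶜ) := by
        refine tendsto_nhdsWithin_iff.2 ⟨?_, ?_⟩
        · have := (Complex.continuous_ofReal.tendsto 0).mono_left
            (nhdsWithin_le_nhds (s := {(0 : ℝ)}ᶜ))
          simpa using this
        · filter_upwards [self_mem_nhdsWithin] with x hx
          simpa using hx
      refine ht.frequently (Eventually.frequently (Eventually.of_forall fun x => ?_))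
      have := hab j k x
      simpa using this
    exact congrFun hz θ
  have hbpos : ∀ j k, r < b j k := fun j k => by
    have h1 := (abs_le.1 (hb j k)).1
    have h2 : L * 1 ≤ L * ((k : ℝ) + 1) := by
      gcongr
      have := Nat.cast_nonneg (α := ℝ) k
      linarith
    linarith
  have hex : ∀ j k, ∃ t : ℂ, t.re = a j k ∧ t.im ^ 2 = b j k ^ 2 - r ^ 2 ∧ F t 0 = 0 := by
    intro j k
    obtain ⟨θ, hθ⟩ := Complex.sin_surjective (-(b j k) / r)
    have hrc : (r : ℂ) ≠ 0 := by exact_mod_cast hr.ne'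
    have h0 := hcx j k θ
    rw [hθ, mul_div_cancel₀ _ hrc, add_neg_cancel] at h0
    set u : ℂ := r * Complex.cos θ with hu
    have hu2 : u ^ 2 = ((r ^ 2 - b j k ^ 2 : ℝ) : ℂ) := by
      have := Complex.sin_sq_add_cos_sq θ
      rw [hθ] at this
      rw [hu, mul_pow, ← sub_eq_iff_eq_add'.2 this.symm]
      push_cast
      field_simp
    have hre := congrArg Complex.re hu2
    have him := congrArg Complex.im hu2
    simp only [pow_two, Complex.mul_re, Complex.mul_im, Complex.ofReal_re, Complex.ofReal_im]
      at hre him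
    have hneg : r * r - b j k * b j k < 0 := by nlinarith [hbpos j k]
    have hure : u.re = 0 := by
      have : u.re * u.im = 0 := by linarith
      rcases mul_eq_zero.1 this with h | h
      · exact h
      · exfalso
        rw [h] at hre
        nlinarith [mul_self_nonneg u.re]
    refine ⟨a j k + u, by simp [hure], ?_, h0⟩
    rw [hure] at hre
    simp only [Complex.add_im, Complex.ofReal_im, zero_add]
    nlinarith
  choose t htre htim ht0 using hex
  have hinj : Function.Injective fun p : ℕ × ℕ => t p.1 p.2 := by
    have key : ∀ m n : ℕ, ∀ x y : ℝ, |x| ≤ R₀ → |y| ≤ R₀ → L * m + x = L * n + y → m = n := by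
      intro m n x y hx hy hxy
      have h1 : L * |(m : ℝ) - n| < L * 1 := by
        have : L * ((m : ℝ) - n) = y - x := by linarith
        rw [← abs_of_pos hLpos, ← abs_mul, abs_of_pos hLpos, this]
        have := abs_sub y x
        linarith
      have h2 := lt_of_mul_lt_mul_left h1 hLpos.le
      have h3 : |(m : ℤ) - n| < 1 := by exact_mod_cast h2
      have := Int.abs_lt_one_iff.1 h3
      omega
    rintro ⟨j, k⟩ ⟨j', k'⟩ h
    change t j k = t j' k' at h
    have h1 : a j k = a j' k' := by rw [← htre, ← htre, h]
    have h2 : b j k = b j' k' := by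
      have : b j k ^ 2 = b j' k' ^ 2 := by
        have h1 := htim j k
        rw [h, htim] at h1
        linarith
      exact (sq_eq_sq₀ (hr.trans (hbpos _ _)).le (hr.trans (hbpos _ _)).le).1 this
    have e1 := key j j' _ _ (ha j k) (ha j' k') (by linarith)
    have e2 := key k k' _ _ (hb j k) (hb j' k') (by linarith)
    rw [e1, e2]
  have hG : Differentiable ℂ fun w => F w 0 :=
    hF.1 _ _ differentiable_id (differentiable_const 0)
  have hbound : ∀ N : ℕ, ‖F 0 0‖ ≤ C * Real.exp (6 * A * L * (N + 1)) * (1 / 2) ^ (N * N) := by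
    intro N
    have := norm_apply_zero_le_of_zeros hG (R := 2 * L * (N + 1))
      (M := C * Real.exp (6 * A * L * (N + 1))) (by positivity) (fun z hz => ?_)
      ((Finset.range N ×ˢ Finset.range N).image fun p => t p.1 p.2) ?_ ?_
    · rwa [Finset.card_image_of_injective _ hinj, Finset.card_product, Finset.card_range] at this
    · refine (hF.2 z 0).trans ?_
      have h1 := (Complex.abs_im_le_norm z).trans hz
      have h2 : A * (|z.im| + |(0 : ℂ).im|) ≤ 6 * A * L * (N + 1) := by
        rw [Complex.zero_im, abs_zero, add_zero]
        calc A * |z.im| ≤ A * (3 * (2 * L * (N + 1))) := by gcongr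
          _ = _ := by ring
      exact mul_le_mul_of_nonneg_left (Real.exp_le_exp.2 h2) hC
    · intro z hz
      obtain ⟨p, -, rfl⟩ := Finset.mem_image.1 hz
      exact ht0 _ _
    · intro z hz
      obtain ⟨⟨j, k⟩, hp, rfl⟩ := Finset.mem_image.1 hz
      simp only [Finset.mem_product, Finset.mem_range] at hp
      have h1 : |(t j k).re| ≤ L * N := by
        rw [htre]
        have h := abs_le.1 (ha j k)
        have hj : L * ((j : ℝ) + 1) ≤ L * N := by
          gcongr
          exact_mod_cast hp.1
        have hj' : 0 ≤ L * (j : ℝ) := by positivity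
        rw [abs_le]
        constructor <;> nlinarith
      have h2 : |(t j k).im| ≤ L * (N + 1) := by
        have h := abs_le.1 (hb j k)
        have hk : L * ((k : ℝ) + 1) ≤ L * N := by
          gcongr
          exact_mod_cast hp.2
        have h3 : |(t j k).im| ≤ |b j k| := by
          rw [← sq_le_sq, htim]
          nlinarith
        rw [abs_of_pos (hr.trans (hbpos _ _))] at h3
        nlinarith
      have := Complex.norm_le_abs_re_add_abs_im (t j k)
      nlinarith
  have hlim : Tendsto (fun N : ℕ => C * Real.exp (6 * A * L * (N + 1)) * (1 / 2) ^ (N * N)) atTop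
      (nhds 0) := by
    set B := 6 * A * L
    have hB : 0 ≤ B := by positivity
    have h2 : Tendsto (fun N : ℕ => C * Real.exp B * (1 / 2 : ℝ) ^ N) atTop (nhds 0) := by
      have := (tendsto_pow_atTop_nhds_zero_of_lt_one (r := (1 / 2 : ℝ)) (by norm_num)
        (by norm_num)).const_mul (C * Real.exp B)
      simpa using this
    have h3 : Tendsto (fun N : ℕ => Real.exp B * (1 / 2 : ℝ) ^ N) atTop (nhds 0) := by
      have := (tendsto_pow_atTop_nhds_zero_of_lt_one (r := (1 / 2 : ℝ)) (by norm_num)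
        (by norm_num)).const_mul (Real.exp B)
      simpa using this
    refine squeeze_zero' (Eventually.of_forall fun N => by positivity) ?_ h2
    filter_upwards [h3.eventually (gt_mem_nhds (show (0 : ℝ) < 1 / 2 by norm_num))] with N hN
    have h4 : Real.exp (B * N) * (1 / 2 : ℝ) ^ (N * N) ≤ (1 / 2) ^ N := by
      have : Real.exp (B * N) * (1 / 2 : ℝ) ^ (N * N) = (Real.exp B * (1 / 2) ^ N) ^ N := by
        rw [mul_pow, ← Real.exp_nat_mul, pow_mul, mul_comm B]
      rw [this]
      gcongr
    calc C * Real.exp (B * (N + 1)) * (1 / 2) ^ (N * N)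
        = C * Real.exp B * (Real.exp (B * N) * (1 / 2) ^ (N * N)) := by
          rw [mul_add, mul_one, Real.exp_add]; ring
      _ ≤ _ := by gcongr
  exact norm_le_zero_iff.1 (ge_of_tendsto' hlim hbound)

theorem norm_sub_le_of_norm_le {G : ℂ → ℂ} {c z : ℂ} {R M : ℝ}
    (hG : DifferentiableOn ℂ G (ball c R)) (hM : ∀ w ∈ ball c R, ‖G w‖ ≤ M) (hz : z ∈ ball c R) :
    ‖G z - G c‖ ≤ 2 * M / R * ‖z - c‖ := by
  have hR : 0 < R := pos_of_mem_ball hz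
  rw [← dist_eq_norm, ← dist_eq_norm]
  refine Complex.dist_le_div_mul_dist_of_mapsTo_ball hG (fun w hw => ?_) hz
  rw [mem_closedBall, dist_eq_norm]
  calc ‖G w - G c‖ ≤ ‖G w‖ + ‖G c‖ := norm_sub_le _ _
    _ ≤ M + M := add_le_add (hM w hw) (hM c (mem_ball_self hR))
    _ = 2 * M := by ring

/-- Pointwise limits of locally bounded families of entire functions are entire. -/
theorem differentiable_of_tendsto_of_bounded {ι : Type*} {l : Filter ι} [l.NeBot]
    {G : ι → ℂ → ℂ} {g : ℂ → ℂ} (hG : ∀ i, Differentiable ℂ (G i))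
    (hb : ∀ c, ∃ M, ∀ i, ∀ w ∈ ball c 1, ‖G i w‖ ≤ M)
    (hlim : ∀ w, Tendsto (fun i => G i w) l (nhds (g w))) : Differentiable ℂ g := by
  rw [← differentiableOn_univ]
  refine TendstoLocallyUniformlyOn.differentiableOn (F := G) (φ := l) ?_
    (Eventually.of_forall fun i => (hG i).differentiableOn) isOpen_univ
  rw [Metric.tendstoLocallyUniformlyOn_iff]
  intro ε hε c _
  obtain ⟨M, hM⟩ := hb c
  obtain ⟨i₀⟩ : Nonempty ι := l.nonempty_of_neBot
  have hM0 : 0 ≤ M := (norm_nonneg _).trans (hM i₀ c (mem_ball_self one_pos))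
  set δ := min 1 (ε / (4 * (2 * M + 1))) with hδ
  have hδ0 : 0 < δ := by positivity
  have hlip : ∀ i, ∀ y ∈ ball c δ, ‖G i y - G i c‖ ≤ ε / 4 := by
    intro i y hy
    have h1 := norm_sub_le_of_norm_le (hG i).differentiableOn (hM i)
      (ball_subset_ball (min_le_left _ _) hy)
    have h2 : ‖y - c‖ ≤ ε / (4 * (2 * M + 1)) := by
      rw [← dist_eq_norm]
      exact (mem_ball.1 hy).le.trans (min_le_right _ _)
    calc _ ≤ _ := h1
      _ ≤ (2 * M + 1) * (ε / (4 * (2 * M + 1))) := by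
        rw [div_one]; gcongr; linarith
      _ = ε / 4 := by field_simp
  refine ⟨ball c δ, mem_nhdsWithin_of_mem_nhds (ball_mem_nhds c hδ0), ?_⟩
  filter_upwards [Metric.tendsto_nhds.1 (hlim c) (ε / 4) (by positivity)] with i hi y hy
  have h3 : ‖g y - g c‖ ≤ ε / 4 :=
    le_of_tendsto ((hlim y).sub (hlim c)).norm (Eventually.of_forall fun i => hlip i y hy)
  have h4 := hlip i y hy
  rw [← dist_eq_norm] at h3 h4
  have h5 := dist_triangle (g y) (g c) (G i y)
  have h6 := dist_triangle (g c) (G i c) (G i y)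
  rw [dist_comm] at hi h4
  linarith

theorem IsExpType.exists_tendsto {ι : Type*} (U : Ultrafilter ι) {A C : ℝ} {F : ι → ℂ → ℂ → ℂ} (hF : ∀ i, IsExpType A C (F i)) :
    ∃ G, IsExpType A C G ∧ ∀ z w, Tendsto (fun i => F i z w) U (nhds (G z w)) := by
  have hex : ∀ z w, ∃ y ∈ closedBall (0 : ℂ) (C * Real.exp (A * (|z.im| + |w.im|))),
      Tendsto (fun i => F i z w) U (nhds y) := by
    intro z w
    refine (isCompact_closedBall _ _).ultrafilter_le_nhds (U.map fun i => F i z w) ?_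
    rw [le_principal_iff]
    refine Filter.mem_map.2 (Filter.univ_mem' fun i => ?_)
    simpa using (hF i).2 z w
  choose G hGm hG using hex
  refine ⟨G, ⟨fun g h hg hh => ?_, fun z w => by simpa using hGm z w⟩, hG⟩
  refine differentiable_of_tendsto_of_bounded (l := (U : Filter ι)) (fun i => (hF i).1 g h hg hh)
    (fun c => ?_) (fun w => hG _ _)
  have hcont : Continuous fun w => C * Real.exp (A * (|(g w).im| + |(h w).im|)) := by
    have := hg.continuous
    have := hh.continuous
    fun_prop
  obtain ⟨M, hM⟩ := (isCompact_closedBall c 1).bddAbove_image hcont.continuousOn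
  exact ⟨M, fun i w hw => ((hF i).2 _ _).trans
    (hM ⟨w, ball_subset_closedBall hw, rfl⟩)⟩

theorem IsExpType.norm_sub_le {A C : ℝ} (hA : 0 ≤ A) (hC : 0 ≤ C) {F : ℂ → ℂ → ℂ}
    (hF : IsExpType A C F) {δ : ℝ} (hδ0 : 0 < δ) (hδ : δ < 1) (x y x' y' : ℝ)
    (h : |x' - x| + |y' - y| ≤ δ) :
    ‖F x' y' - F x y‖ ≤ 2 * C * Real.exp A * δ := by
  set G : ℂ → ℂ := fun w => F (x + w * (x' - x)) (y + w * (y' - y)) with hG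
  have hd : Differentiable ℂ G := by
    refine hF.1 _ _ ?_ ?_ <;> fun_prop
  have hM : ∀ w ∈ ball (0 : ℂ) (1 / δ), ‖G w‖ ≤ C * Real.exp A := by
    intro w hw
    refine (hF.2 _ _).trans ?_
    have hw' : |w.im| ≤ 1 / δ := (Complex.abs_im_le_norm w).trans (mem_ball_zero_iff.1 hw).le
    have e1 : ∀ s t : ℝ, ((s : ℂ) + w * (t - s)).im = w.im * (t - s) := by
      intro s t
      simp
    rw [e1, e1, abs_mul, abs_mul, ← mul_add]
    have : |w.im| * (|x' - x| + |y' - y|) ≤ 1 := by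
      calc _ ≤ 1 / δ * δ := by gcongr
        _ = 1 := by field_simp
    gcongr
    nlinarith
  have := norm_sub_le_of_norm_le hd.differentiableOn hM (z := 1)
    (by simpa using (one_lt_inv₀ hδ0).2 hδ)
  simp only [hG, one_mul, zero_mul, add_zero, add_sub_cancel, sub_zero, norm_one, mul_one] at this
  refine this.trans_eq ?_
  field_simp

/-- A compactness argument: functions of a fixed exponential type which are not small at the
origin cannot be arbitrarily small on circles around relatively dense sets of centers. -/
theorem false_of_isExpType_of_tendsto {A C : ℝ} (hA : 0 ≤ A) (hC : 0 ≤ C)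
    {F : ℕ → ℂ → ℂ → ℂ} (hF : ∀ n, IsExpType A C (F n)) {r R₀ : ℝ} (hr : 0 < r) (hR₀ : 0 < R₀)
    {W : ℕ → Set (ℝ × ℝ)} (hW : ∀ n (x y : ℝ), ∃ p ∈ W n, |p.1 - x| ≤ R₀ ∧ |p.2 - y| ≤ R₀)
    {ε : ℕ → ℝ} (hε : Tendsto ε atTop (nhds 0))
    (hsmall : ∀ n, ∀ p ∈ W n, ∀ θ : ℝ,
      ‖F n (p.1 + r * Real.cos θ : ℝ) (p.2 + r * Real.sin θ : ℝ)‖ ≤ ε n)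
    (h0 : ∀ n, 1 / 2 ≤ ‖F n 0 0‖) : False := by
  set U : Ultrafilter ℕ := hyperfilter ℕ
  have hU : (U : Filter ℕ) ≤ atTop := by
    rw [← Nat.cofinite_eq_atTop]
    exact hyperfilter_le_cofinite
  obtain ⟨G, hG, hlim⟩ := IsExpType.exists_tendsto U hF
  set L := 3 * R₀ + 3 * r with hL
  choose p hpW hp1 hp2 using fun n (j k : ℕ) => hW n (L * j) (L * (k + 1))
  have hex : ∀ j k : ℕ, ∃ q ∈ closedBall ((L * j, L * (k + 1)) : ℝ × ℝ) R₀,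
      Tendsto (fun n => p n j k) U (nhds q) := by
    intro j k
    refine (isCompact_closedBall _ _).ultrafilter_le_nhds (U.map fun n => p n j k) ?_
    rw [le_principal_iff]
    refine Filter.mem_map.2 (Filter.univ_mem' fun n => ?_)
    rw [Set.mem_preimage, mem_closedBall, Prod.dist_eq, Real.dist_eq, Real.dist_eq]
    exact max_le (hp1 n j k) (hp2 n j k)
  choose q hq hqlim using hex
  have hzero : G 0 0 = 0 := by
    refine hG.eq_zero_of_circles hA hC hr hR₀ hL.symm.le (fun j k => (q j k).1)
      (fun j k => (q j k).2) (fun j k => ?_) (fun j k => ?_) fun j k θ => ?_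
    · have := hq j k
      rw [mem_closedBall, Prod.dist_eq, Real.dist_eq, Real.dist_eq] at this
      exact (le_max_left _ _).trans this
    · have := hq j k
      rw [mem_closedBall, Prod.dist_eq, Real.dist_eq, Real.dist_eq] at this
      exact (le_max_right _ _).trans this
    · set x := (q j k).1 + r * Real.cos θ
      set y := (q j k).2 + r * Real.sin θ
      have hxy : G x y = 0 := by
        have hbd : ∀ᶠ δ in nhdsWithin (0 : ℝ) (Set.Ioi 0), ‖G x y‖ ≤ 2 * C * Real.exp A * δ := by
          filter_upwards [Ioo_mem_nhdsGT (zero_lt_one' ℝ)] with δ hδ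
          have hl : Tendsto (fun n => ε n + 2 * C * Real.exp A * δ) U
              (nhds (0 + 2 * C * Real.exp A * δ)) := (hε.mono_left hU).add tendsto_const_nhds
          rw [zero_add] at hl
          refine le_of_tendsto_of_tendsto (hlim x y).norm hl ?_
          filter_upwards [Metric.tendsto_nhds.1 (hqlim j k) (δ / 2) (half_pos hδ.1)] with n hn
          rw [Prod.dist_eq, Real.dist_eq, Real.dist_eq, max_lt_iff, abs_sub_comm,
            abs_sub_comm (p n j k).2] at hn
          have h1 := hsmall n _ (hpW n j k) θ
          have h2 := (hF n).norm_sub_le hA hC hδ.1 hδ.2 ((p n j k).1 + r * Real.cos θ)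
            ((p n j k).2 + r * Real.sin θ) x y (by
              simp only [x, y, add_sub_add_right_eq_sub]; linarith [hn.1, hn.2])
          have h3 := norm_sub_norm_le (F n x y)
            (F n ((p n j k).1 + r * Real.cos θ : ℝ) ((p n j k).2 + r * Real.sin θ : ℝ))
          linarith
        have hl : Tendsto (fun δ => 2 * C * Real.exp A * δ) (nhdsWithin (0 : ℝ) (Set.Ioi 0))
            (nhds (2 * C * Real.exp A * 0)) :=
          (tendsto_id.mono_left nhdsWithin_le_nhds).const_mul _
        rw [mul_zero] at hl
        exact norm_le_zero_iff.1 (ge_of_tendsto hl hbd)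
      simpa [x, y] using hxy
  have := ge_of_tendsto' (hlim 0 0).norm h0
  rw [hzero, norm_zero] at this
  norm_num at this

theorem HasCompactSupport.integrable_fourier {E : Type*} [NormedAddCommGroup E]
    [InnerProductSpace ℝ E] [FiniteDimensional ℝ E] [MeasurableSpace E] [BorelSpace E]
    {ψ : E → ℂ} (hψ : ContDiff ℝ (⊤ : ℕ∞) ψ) (hψc : HasCompactSupport ψ) :
    Integrable (𝓕 ψ) :=
  (𝓕 (hψc.toSchwartzMap hψ)).integrable

/-- The Fourier transform of a modulated dilation. -/
theorem fourier_comp_smul_mul_cexp {E : Type*} [NormedAddCommGroup E]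
    [InnerProductSpace ℝ E] [FiniteDimensional ℝ E] [MeasurableSpace E] [BorelSpace E]
    (θ : E → ℂ) (ε : ℝ) (x u : E) :
    𝓕 (fun ξ => θ (ε • ξ) * Complex.exp ((2 * Real.pi * ⟪ξ, x⟫ : ℝ) * Complex.I)) (x + ε • u) =
      |(ε ^ Module.finrank ℝ E)⁻¹| • 𝓕 θ u := by
  rw [Real.fourier_eq', Real.fourier_eq', ← Measure.integral_comp_smul]
  refine integral_congr_ae (Eventually.of_forall fun ξ => ?_)
  simp only [smul_eq_mul]
  rw [mul_left_comm, ← Complex.exp_add, mul_comm, ← add_mul, ← Complex.ofReal_add]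
  congr 4
  rw [inner_add_right, inner_smul_right, inner_smul_left]
  simp only [conj_trivial]
  ring

/-- Reproducing formula: if `χ` is a test function which is `1` near the spectrum of `f`,
then `f` is the convolution of `f` with the inverse Fourier transform of `χ`. -/
theorem MemBernstein.apply_eq_integral {E : Type*} [NormedAddCommGroup E]
    [InnerProductSpace ℝ E] [FiniteDimensional ℝ E] [MeasurableSpace E] [BorelSpace E]
    {Ω : Set E} {f : E → ℂ} (hf : MemBernstein Ω f) {χ : E → ℂ}
    (hχ : ContDiff ℝ (⊤ : ℕ∞) χ) (hχc : HasCompactSupport χ) {U : Set E} (hU : IsOpen U)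
    (hΩU : Ω ⊆ U) (hχU : ∀ ξ ∈ U, χ ξ = 1) (x : E) :
    f x = ∫ y, f y *
      𝓕 (fun ξ => χ ξ * Complex.exp ((2 * Real.pi * ⟪ξ, x⟫ : ℝ) * Complex.I)) y := by
  obtain ⟨hfc, ⟨M, hM⟩, hf0⟩ := hf
  have h_int : ∀ ψ : E → ℂ, ContDiff ℝ (⊤ : ℕ∞) ψ → HasCompactSupport ψ →
      Integrable fun y => f y * 𝓕 ψ y := fun ψ h1 h2 =>
    (h2.integrable_fourier h1).bdd_mul (c := M) hfc.aestronglyMeasurable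
      (Eventually.of_forall hM)
  set e : E → ℂ := fun ξ => Complex.exp ((2 * Real.pi * ⟪ξ, x⟫ : ℝ) * Complex.I) with he
  have hes : ContDiff ℝ (⊤ : ℕ∞) e := by
    refine ContDiff.cexp (ContDiff.mul (Complex.ofRealCLM.contDiff.comp ?_) contDiff_const)
    exact contDiff_const.mul (contDiff_id.inner ℝ contDiff_const)
  obtain ⟨R, hR0, hR⟩ : ∃ R > 0, tsupport χ ⊆ closedBall 0 R := by
    obtain ⟨R, hR⟩ := hχc.isCompact.isBounded.subset_closedBall (0 : E)
    exact ⟨max R 1, by positivity, hR.trans (closedBall_subset_closedBall (le_max_left _ _))⟩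
  let b : ContDiffBump (0 : E) := ⟨R, R + 1, hR0, by linarith⟩
  set θ : E → ℂ := fun ξ => ((b ξ : ℝ) : ℂ) with hθ
  have hθs : ContDiff ℝ (⊤ : ℕ∞) θ := Complex.ofRealCLM.contDiff.comp b.contDiff
  have hθc : HasCompactSupport θ := b.hasCompactSupport.comp_left Complex.ofReal_zero
  have hθF : Integrable (𝓕 θ) := hθc.integrable_fourier hθs
  have hθ1 : ∫ u, 𝓕 θ u = 1 := by
    have h := congrFun (hθs.continuous.fourierInv_fourier_eq
      (hθs.continuous.integrable_of_hasCompactSupport hθc) hθF) 0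
    rw [Real.fourierInv_eq'] at h
    simp only [inner_zero_right, mul_zero, Complex.ofReal_zero, zero_mul, Complex.exp_zero,
      one_smul] at h
    rw [h, hθ]
    simp [b.one_of_mem_closedBall (mem_closedBall_self hR0.le)]
  have key : ∀ ε ∈ Set.Ioo (0 : ℝ) 1, ∫ u, f (x + ε • u) * 𝓕 θ u =
      ∫ y, f y * 𝓕 (fun ξ => χ ξ * e ξ) y := by
    intro ε hε
    set ψ : E → ℂ := fun ξ => θ (ε • ξ) * e ξ with hψ
    have hψs : ContDiff ℝ (⊤ : ℕ∞) ψ := (hθs.comp (contDiff_const_smul ε)).mul hes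
    have hψc : HasCompactSupport ψ :=
      (hθc.comp_homeomorph (Homeomorph.smulOfNeZero ε hε.1.ne')).mul_right
    have h1 : ∫ u, f (x + ε • u) * 𝓕 θ u = ∫ y, f y * 𝓕 ψ y := by
      have h2 := Measure.integral_comp_smul (μ := (volume : Measure E))
        (fun u => f (x + u) * 𝓕 ψ (x + u)) ε
      rw [integral_add_left_eq_self (fun y => f y * 𝓕 ψ y) x] at h2
      have h3 : ∀ u, f (x + ε • u) * 𝓕 ψ (x + ε • u) =
          |(ε ^ Module.finrank ℝ E)⁻¹| • (f (x + ε • u) * 𝓕 θ u) := by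
        intro u
        rw [hψ, he, fourier_comp_smul_mul_cexp θ ε, mul_smul_comm]
      simp_rw [h3] at h2
      rw [integral_smul] at h2
      refine smul_right_injective ℂ (r := |(ε ^ Module.finrank ℝ E)⁻¹|) ?_ h2
      exact abs_ne_zero.2 (inv_ne_zero (pow_ne_zero _ hε.1.ne'))
    have hχψ : (fun ξ => χ ξ * e ξ) = fun ξ => χ ξ * ψ ξ := by
      funext ξ
      by_cases hξ : ξ ∈ tsupport χ
      · have : θ (ε • ξ) = 1 := by
          rw [hθ]
          simp only
          rw [b.one_of_mem_closedBall, Complex.ofReal_one]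
          have := hR hξ
          rw [mem_closedBall_zero_iff] at this ⊢
          rw [norm_smul, Real.norm_of_nonneg hε.1.le]
          calc ε * ‖ξ‖ ≤ 1 * R := by gcongr; exact hε.2.le
            _ = R := one_mul R
        simp only [hψ, this, one_mul]
      · rw [image_eq_zero_of_notMem_tsupport hξ, zero_mul, zero_mul]
    have hs1 : ContDiff ℝ (⊤ : ℕ∞) fun ξ => χ ξ * ψ ξ := hχ.mul hψs
    have hs2 : ContDiff ℝ (⊤ : ℕ∞) fun ξ => (1 - χ ξ) * ψ ξ := (contDiff_const.sub hχ).mul hψs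
    have hc1 : HasCompactSupport fun ξ => χ ξ * ψ ξ := hχc.mul_right
    have hc2 : HasCompactSupport fun ξ => (1 - χ ξ) * ψ ξ := hψc.mul_left
    have h4 : 𝓕 ψ = fun y => 𝓕 (fun ξ => χ ξ * ψ ξ) y + 𝓕 (fun ξ => (1 - χ ξ) * ψ ξ) y := by
      funext y
      have := congrArg (fun g : SchwartzMap E ℂ => g y)
        (FourierTransform.fourier_add (hc1.toSchwartzMap hs1) (hc2.toSchwartzMap hs2))
      refine Eq.trans ?_ this
      change 𝓕 ψ y = 𝓕 (fun ξ => χ ξ * ψ ξ + (1 - χ ξ) * ψ ξ) y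
      have : ψ = fun ξ => χ ξ * ψ ξ + (1 - χ ξ) * ψ ξ := by
        funext ξ
        ring
      rw [← this]
    have h5 : ∫ y, f y * 𝓕 (fun ξ => (1 - χ ξ) * ψ ξ) y = 0 := by
      refine hf0 _ hs2 hc2 ?_
      rw [← Set.disjoint_iff_inter_eq_empty]
      have : tsupport (fun ξ => (1 - χ ξ) * ψ ξ) ⊆ Uᶜ := by
        refine closure_minimal (fun ξ hξ hξU => hξ ?_) hU.isClosed_compl
        simp [hχU ξ hξU]
      exact (disjoint_compl_left.mono_right hΩU).mono_left this
    rw [h1, hχψ, h4]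
    simp_rw [mul_add]
    rw [integral_add (h_int _ hs1 hc1) (h_int _ hs2 hc2), h5, add_zero]
  have hlim : Tendsto (fun ε : ℝ => ∫ u, f (x + ε • u) * 𝓕 θ u) (nhdsWithin 0 (Set.Ioi 0))
      (nhds (∫ u, f x * 𝓕 θ u)) := by
    refine tendsto_integral_filter_of_dominated_convergence (fun u => M * ‖𝓕 θ u‖)
      (Eventually.of_forall fun ε => ?_) (Eventually.of_forall fun ε => ?_)
      (hθF.norm.const_mul M) (Eventually.of_forall fun u => ?_)
    · exact (hfc.comp (by fun_prop)).aestronglyMeasurable.mul hθF.aestronglyMeasurable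
    · refine Eventually.of_forall fun u => ?_
      rw [norm_mul]
      gcongr
      exact hM _
    · refine Tendsto.mul_const _ (Tendsto.mono_left ?_ nhdsWithin_le_nhds)
      have : Continuous fun ε : ℝ => f (x + ε • u) := hfc.comp (by fun_prop)
      simpa using this.tendsto 0
  rw [integral_const_mul, hθ1, mul_one] at hlim
  refine tendsto_nhds_unique hlim (tendsto_const_nhds.congr' ?_)
  filter_upwards [Ioo_mem_nhdsGT (zero_lt_one' ℝ)] with ε hε
  exact (key ε hε).symm

/-- Integrals depending holomorphically on a parameter. -/
theorem differentiable_integral_of_dominated {α : Type*} [MeasurableSpace α] {μ : Measure α}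
    {K : ℂ → α → ℂ} (hm : ∀ z, AEStronglyMeasurable (K z) μ)
    (hd : ∀ a, Differentiable ℂ fun z => K z a)
    (hb : ∀ c, ∃ bound : α → ℝ, Integrable bound μ ∧ ∀ z ∈ ball c 1, ∀ a, ‖K z a‖ ≤ bound a) :
    Differentiable ℂ fun z => ∫ a, K z a ∂μ := by
  intro c
  obtain ⟨bound, hbi, hbd⟩ := hb c
  have hlim : ∀ a, Tendsto (fun n : ℕ => ((1 / ((n : ℂ) + 1)))⁻¹ •
      (K (c + 1 / ((n : ℂ) + 1)) a - K c a)) atTop (nhds (deriv (fun z => K z a) c)) := by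
    intro a
    have h := hasDerivAt_iff_tendsto_slope_zero.1 (hd a c).hasDerivAt
    refine h.comp (tendsto_nhdsWithin_iff.2 ⟨tendsto_one_div_add_atTop_nhds_zero_nat, ?_⟩)
    exact Eventually.of_forall fun n => one_div_ne_zero (Nat.cast_add_one_ne_zero n)
  refine (hasFDerivAt_integral_of_dominated_loc_of_lip' (𝕜 := ℂ) (s := ball c 1)
    (bound := fun a => 2 * bound a / 1)
    (F' := fun a => ContinuousLinearMap.toSpanSingleton ℂ (deriv (fun z => K z a) c))
    (ball_mem_nhds c one_pos) (fun z _ => hm z) ?_ ?_ ?_ ?_ ?_).2.differentiableAt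
  · exact hbi.mono' (hm c) (Eventually.of_forall (hbd c (mem_ball_self one_pos)))
  · have hmeas : AEStronglyMeasurable (fun a => deriv (fun z => K z a) c) μ :=
      aestronglyMeasurable_of_tendsto_ae atTop
        (f := fun (n : ℕ) a => ((1 / ((n : ℂ) + 1)))⁻¹ • (K (c + 1 / ((n : ℂ) + 1)) a - K c a))
        (fun n => ((hm (c + 1 / ((n : ℂ) + 1))).sub (hm c)).const_smul (1 / ((n : ℂ) + 1))⁻¹)
        (Eventually.of_forall hlim)
    exact (ContinuousLinearMap.toSpanSingletonCLE (𝕜 := ℂ) (E := ℂ)).continuous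
      |>.comp_aestronglyMeasurable hmeas
  · exact Eventually.of_forall fun a z hz =>
      norm_sub_le_of_norm_le (hd a).differentiableOn (fun w hw => hbd w hw a) hz
  · exact (hbi.const_mul 2).div_const 1
  · exact Eventually.of_forall fun a => (hd a c).hasDerivAt.hasFDerivAt

/-- The Fourier-Laplace transform of a function on the line. -/
def fourierLaplace (χ : ℝ → ℂ) (z : ℂ) : ℂ :=
  ∫ ξ : ℝ, χ ξ * Complex.exp (2 * Real.pi * Complex.I * z * ξ)

theorem norm_mul_cexp_le {χ : ℝ → ℂ} {b : ℝ} (hb : tsupport χ ⊆ closedBall 0 b) (z : ℂ) (ξ : ℝ) :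
    ‖χ ξ * Complex.exp (2 * Real.pi * Complex.I * z * ξ)‖ ≤
      Real.exp (2 * Real.pi * b * |z.im|) * ‖χ ξ‖ := by
  rw [norm_mul, mul_comm]
  by_cases hξ : ξ ∈ tsupport χ
  · have h1 : |ξ| ≤ b := by simpa using hb hξ
    rw [Complex.norm_exp]
    gcongr
    have h2 : (2 * Real.pi * Complex.I * z * ξ).re = 2 * Real.pi * (-(z.im * ξ)) := by
      simp
      ring
    rw [h2, mul_assoc (2 * Real.pi)]
    have h3 : -(z.im * ξ) ≤ |z.im| * |ξ| := by
      rw [← abs_mul]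
      exact neg_le_abs _
    have h4 : |z.im| * |ξ| ≤ b * |z.im| := by
      rw [mul_comm b]
      gcongr
    gcongr
    exact h3.trans h4
  · rw [image_eq_zero_of_notMem_tsupport hξ]
    simp

theorem norm_fourierLaplace_le {χ : ℝ → ℂ} {b : ℝ} (hχ : Integrable χ)
    (hb : tsupport χ ⊆ closedBall 0 b) (z : ℂ) :
    ‖fourierLaplace χ z‖ ≤ (∫ ξ, ‖χ ξ‖) * Real.exp (2 * Real.pi * b * |z.im|) := by
  rw [mul_comm, ← integral_const_mul]
  exact norm_integral_le_of_norm_le (hχ.norm.const_mul _)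
    (Eventually.of_forall (norm_mul_cexp_le hb z))

theorem differentiable_fourierLaplace {χ : ℝ → ℂ} {b : ℝ} (hb0 : 0 ≤ b) (hχ : Continuous χ)
    (hb : tsupport χ ⊆ closedBall 0 b) : Differentiable ℂ (fourierLaplace χ) := by
  have hχi : Integrable χ := hχ.integrable_of_hasCompactSupport
    ((isCompact_closedBall _ _).of_isClosed_subset (isClosed_tsupport _) hb)
  refine differentiable_integral_of_dominated (fun z => ?_) (fun ξ => ?_) fun c => ?_
  · have : Continuous fun ξ : ℝ => χ ξ * Complex.exp (2 * Real.pi * Complex.I * z * ξ) := by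
      fun_prop
    exact this.aestronglyMeasurable
  · fun_prop
  · refine ⟨fun ξ => Real.exp (2 * Real.pi * b * (‖c‖ + 1)) * ‖χ ξ‖, hχi.norm.const_mul _,
      fun z hz ξ => (norm_mul_cexp_le hb z ξ).trans ?_⟩
    have h1 : |z.im| ≤ ‖c‖ + 1 := by
      have h2 := Complex.abs_im_le_norm z
      have h3 := norm_sub_norm_le z c
      have h4 : ‖z - c‖ < 1 := by rwa [← dist_eq_norm]
      linarith
    beta_reduce
    gcongr

theorem fourierLaplace_deriv {χ : ℝ → ℂ} (hχ : ContDiff ℝ 1 χ) (hχc : HasCompactSupport χ)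
    (z : ℂ) :
    fourierLaplace (deriv χ) z = -(2 * Real.pi * Complex.I * z) * fourierLaplace χ z := by
  have hχd : Continuous (deriv χ) := hχ.continuous_deriv le_rfl
  have hv : ∀ ξ : ℝ, HasDerivAt (fun ξ : ℝ => Complex.exp (2 * Real.pi * Complex.I * z * ξ))
      (2 * Real.pi * Complex.I * z * Complex.exp (2 * Real.pi * Complex.I * z * ξ)) ξ := by
    intro ξ
    have := ((Complex.ofRealCLM.hasDerivAt (x := ξ)).const_mul
      (2 * Real.pi * Complex.I * z)).cexp
    simpa [mul_comm] using this
  have h := integral_mul_deriv_eq_deriv_mul_of_integrable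
    (u := χ) (u' := deriv χ) (fun ξ _ => (hχ.differentiable one_ne_zero ξ).hasDerivAt)
    (fun ξ _ => hv ξ) ?_ ?_ ?_
  · unfold fourierLaplace
    rw [eq_neg_iff_add_eq_zero, add_comm, ← eq_neg_iff_add_eq_zero] at h
    rw [h, neg_mul, ← integral_const_mul]
    congr 1
    refine integral_congr_ae (Eventually.of_forall fun ξ => ?_)
    simp only
    ring
  · exact Continuous.integrable_of_hasCompactSupport (by fun_prop) hχc.mul_right
  · exact Continuous.integrable_of_hasCompactSupport (by fun_prop) hχc.deriv.mul_right
  · exact Continuous.integrable_of_hasCompactSupport (by fun_prop) hχc.mul_right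

theorem exists_norm_fourierLaplace_le {χ : ℝ → ℂ} (hχ : ContDiff ℝ 2 χ) {b : ℝ}
    (hb : tsupport χ ⊆ closedBall 0 b) : ∃ K ≥ 0, ∀ z,
      ‖fourierLaplace χ z‖ ≤ K * Real.exp (2 * Real.pi * b * |z.im|) * (1 + z.re ^ 2)⁻¹ := by
  have hχc : HasCompactSupport χ :=
    (isCompact_closedBall _ _).of_isClosed_subset (isClosed_tsupport _) hb
  have hχ1 : ContDiff ℝ 1 (deriv χ) := hχ.deriv'
  have h_int := hχ.continuous.integrable_of_hasCompactSupport (μ := volume) hχc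
  have h_int2 := (hχ1.continuous_deriv le_rfl).integrable_of_hasCompactSupport
    (μ := volume) hχc.deriv.deriv
  refine ⟨(∫ ξ, ‖χ ξ‖) + ∫ ξ, ‖deriv (deriv χ) ξ‖, by positivity, fun z => ?_⟩
  have h0 := norm_fourierLaplace_le h_int hb z
  have h2 := norm_fourierLaplace_le h_int2
    ((tsupport_deriv_subset).trans (tsupport_deriv_subset.trans hb)) z
  rw [fourierLaplace_deriv hχ1 hχc.deriv, fourierLaplace_deriv (hχ.of_le one_le_two) hχc,
    ← mul_assoc, norm_mul] at h2
  have h3 : z.re ^ 2 ≤ ‖-(2 * Real.pi * Complex.I * z) * -(2 * Real.pi * Complex.I * z)‖ := by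
    simp only [norm_mul, norm_neg, Complex.norm_I, Complex.norm_real, Complex.norm_ofNat, mul_one,
      Real.norm_of_nonneg Real.pi_pos.le]
    have h4 : |z.re| ≤ 2 * Real.pi * ‖z‖ := by
      have := Complex.abs_re_le_norm z
      have := Real.pi_gt_three
      have := norm_nonneg z
      nlinarith
    rw [← sq_abs, pow_two]
    gcongr
  rw [← div_eq_mul_inv, le_div_iff₀ (by positivity)]
  have h5 := mul_le_mul_of_nonneg_right h3 (norm_nonneg (fourierLaplace χ z))
  linarith

theorem integrable_inv_one_add_sq_mul_inv_one_add_sq :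
    Integrable fun y : EuclideanSpace ℝ (Fin 2) => (1 + y 0 ^ 2)⁻¹ * (1 + y 1 ^ 2)⁻¹ := by
  have h : Integrable fun y : Fin 2 → ℝ => ∏ i, (1 + y i ^ 2)⁻¹ :=
    Integrable.fintype_prod (f := fun _ t => (1 + t ^ 2)⁻¹) fun _ => integrable_inv_one_add_sq
  have h2 := (PiLp.volume_preserving_ofLp (Fin 2)).integrable_comp_of_integrable h
  simpa [Function.comp_def, Fin.prod_univ_two, mul_comm] using h2

theorem inv_one_add_sub_sq_le {a B : ℝ} (ha : |a| ≤ B) (t : ℝ) :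
    (1 + (a - t) ^ 2)⁻¹ ≤ 2 * (1 + B ^ 2) * (1 + t ^ 2)⁻¹ := by
  rw [← div_eq_mul_inv, inv_eq_one_div, div_le_div_iff₀ (by positivity) (by positivity)]
  have h1 : a ^ 2 ≤ B ^ 2 := sq_le_sq' (abs_le.1 ha).1 (abs_le.1 ha).2
  nlinarith [sq_nonneg (a - t), sq_nonneg (2 * a - t), mul_nonneg (sq_nonneg B) (sq_nonneg (a - t))]

/-- The Fourier transform of a tensor product, as a product of Fourier-Laplace transforms. -/
theorem fourier_mul_cexp_eq_fourierLaplace (χ : ℝ → ℂ) (x y : EuclideanSpace ℝ (Fin 2)) :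
    𝓕 (fun ξ : EuclideanSpace ℝ (Fin 2) => χ (ξ 0) * χ (ξ 1) *
      Complex.exp ((2 * Real.pi * ⟪ξ, x⟫ : ℝ) * Complex.I)) y =
      fourierLaplace χ (x 0 - y 0) * fourierLaplace χ (x 1 - y 1) := by
  rw [Real.fourier_eq']
  have h := integral_fintype_prod_volume_eq_prod (ι := Fin 2) (𝕜 := ℂ) (E := fun _ => ℝ)
    (fun i ξ => χ ξ * Complex.exp (2 * Real.pi * Complex.I * (x i - y i) * ξ))
  rw [Fin.prod_univ_two] at h
  refine Eq.trans ?_ h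
  rw [← (PiLp.volume_preserving_ofLp (Fin 2)).integral_comp
    (MeasurableEquiv.toLp 2 (Fin 2 → ℝ)).symm.measurableEmbedding]
  refine integral_congr_ae (Eventually.of_forall fun ξ => ?_)
  simp only [Fin.prod_univ_two, smul_eq_mul]
  have h1 : ∀ a b p q : ℂ, Complex.exp a * (p * q * Complex.exp b) =
      p * q * Complex.exp (a + b) := by
    intro a b p q
    rw [Complex.exp_add]; ring
  have h2 : ∀ a b p q : ℂ, p * Complex.exp a * (q * Complex.exp b) =
      p * q * Complex.exp (a + b) := by
    intro a b p q
    rw [Complex.exp_add]; ring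
  rw [h1, h2]
  congr 2
  simp only [PiLp.inner_apply, Fin.sum_univ_two, RCLike.inner_apply, conj_trivial]
  push_cast
  ring

/-- Functions in a Bernstein space on the plane extend to `ℂ²` as entire functions of exponential
type. -/
theorem exists_isExpType_extension {Ω : Set (EuclideanSpace ℝ (Fin 2))} (hΩ : IsCompact Ω) :
    ∃ A ≥ 0, ∃ C ≥ 0, ∀ f : EuclideanSpace ℝ (Fin 2) → ℂ, MemBernstein Ω f →
      ∀ M : ℝ, (∀ x, ‖f x‖ ≤ M) →
        ∃ F, IsExpType A (M * C) F ∧ ∀ x : EuclideanSpace ℝ (Fin 2), F (x 0) (x 1) = f x := by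
  obtain ⟨a, ha0, ha⟩ : ∃ a > 0, Ω ⊆ ball 0 a := by
    obtain ⟨R, hR⟩ := hΩ.isBounded.subset_ball (0 : EuclideanSpace ℝ (Fin 2))
    exact ⟨max R 1, by positivity, hR.trans (ball_subset_ball (le_max_left _ _))⟩
  let β : ContDiffBump (0 : ℝ) := ⟨a, a + 1, ha0, by linarith⟩
  set χ : ℝ → ℂ := fun ξ => ((β ξ : ℝ) : ℂ) with hχ
  have hχs : ContDiff ℝ (⊤ : ℕ∞) χ := Complex.ofRealCLM.contDiff.comp β.contDiff
  have hχb : tsupport χ ⊆ closedBall 0 (a + 1) := by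
    rw [← β.tsupport_eq]
    refine closure_mono fun ξ hξ hξ0 => hξ ?_
    simp only [hχ, hξ0, Complex.ofReal_zero]
  have hχ0 : ∀ ξ : ℝ, a + 1 < |ξ| → χ ξ = 0 := fun ξ hξ =>
    image_eq_zero_of_notMem_tsupport fun h => by
      have := hχb h
      rw [mem_closedBall_zero_iff, Real.norm_eq_abs] at this
      linarith
  have hdiff := differentiable_fourierLaplace (by positivity) hχs.continuous hχb
  obtain ⟨K, hK0, hK⟩ := exists_norm_fourierLaplace_le
    (contDiff_infty.1 hχs 2) hχb
  set A := 2 * Real.pi * (a + 1) with hA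
  have hA0 : 0 ≤ A := by positivity
  set J := ∫ y : EuclideanSpace ℝ (Fin 2), (1 + y 0 ^ 2)⁻¹ * (1 + y 1 ^ 2)⁻¹ with hJ
  have hJ0 : 0 ≤ J := integral_nonneg fun y => by positivity
  refine ⟨A, hA0, K ^ 2 * J, by positivity, fun f hf M hM => ?_⟩
  have hM0 : 0 ≤ M := (norm_nonneg _).trans (hM 0)
  have hbound : ∀ (z w : ℂ) (y : EuclideanSpace ℝ (Fin 2)),
      ‖f y * (fourierLaplace χ (z - y 0) * fourierLaplace χ (w - y 1))‖ ≤
        M * K ^ 2 * Real.exp (A * (|z.im| + |w.im|)) *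
          ((1 + (z.re - y 0) ^ 2)⁻¹ * (1 + (w.re - y 1) ^ 2)⁻¹) := by
    intro z w y
    have h1 := hK (z - y 0)
    have h2 := hK (w - y 1)
    simp only [Complex.sub_im, Complex.ofReal_im, sub_zero, Complex.sub_re, Complex.ofReal_re]
      at h1 h2
    rw [norm_mul, norm_mul]
    calc _ ≤ M * ((K * Real.exp (A * |z.im|) * (1 + (z.re - y 0) ^ 2)⁻¹) *
          (K * Real.exp (A * |w.im|) * (1 + (w.re - y 1) ^ 2)⁻¹)) := by
          gcongr
          exact hM y
      _ = _ := by
        rw [mul_add, Real.exp_add]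
        ring
  refine ⟨fun z w => ∫ y : EuclideanSpace ℝ (Fin 2),
    f y * (fourierLaplace χ (z - y 0) * fourierLaplace χ (w - y 1)), ⟨?_, ?_⟩, ?_⟩
  · intro g h hg hh
    refine differentiable_integral_of_dominated (fun z => ?_) (fun y => ?_) fun c => ?_
    · have h1 := hf.1
      have h2 := hdiff.continuous
      exact Continuous.aestronglyMeasurable (by fun_prop)
    · exact (differentiable_const _).mul ((hdiff.comp (hg.sub_const _)).mul
        (hdiff.comp (hh.sub_const _)))
    · obtain ⟨B₁, hB₁⟩ := (isCompact_closedBall c 1).exists_bound_of_continuousOn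
        hg.continuous.continuousOn
      obtain ⟨B₂, hB₂⟩ := (isCompact_closedBall c 1).exists_bound_of_continuousOn
        hh.continuous.continuousOn
      refine ⟨fun y => M * K ^ 2 * Real.exp (A * (B₁ + B₂)) *
        (2 * (1 + B₁ ^ 2) * (2 * (1 + B₂ ^ 2)) * ((1 + y 0 ^ 2)⁻¹ * (1 + y 1 ^ 2)⁻¹)),
        (integrable_inv_one_add_sq_mul_inv_one_add_sq.const_mul _).const_mul _,
        fun z hz y => (hbound _ _ y).trans ?_⟩
      have hz' := ball_subset_closedBall hz
      have e1 := (Complex.abs_im_le_norm _).trans (hB₁ z hz')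
      have e2 := (Complex.abs_im_le_norm _).trans (hB₂ z hz')
      have e3 := inv_one_add_sub_sq_le ((Complex.abs_re_le_norm _).trans (hB₁ z hz')) (y 0)
      have e4 := inv_one_add_sub_sq_le ((Complex.abs_re_le_norm _).trans (hB₂ z hz')) (y 1)
      have e5 := mul_le_mul e3 e4 (by positivity) (by positivity)
      refine mul_le_mul ?_ (e5.trans_eq (by ring)) (by positivity) (by positivity)
      gcongr
  · intro z w
    set c : EuclideanSpace ℝ (Fin 2) := !₂[z.re, w.re] with hc
    have h_int := integrable_inv_one_add_sq_mul_inv_one_add_sq.comp_sub_left c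
    have heq := integral_sub_left_eq_self
      (fun y : EuclideanSpace ℝ (Fin 2) => (1 + y 0 ^ 2)⁻¹ * (1 + y 1 ^ 2)⁻¹) volume c
    simp only [PiLp.sub_apply, hc] at h_int heq
    simp only [Matrix.cons_val_zero, Matrix.cons_val_one] at h_int heq
    refine (norm_integral_le_of_norm_le (h_int.const_mul _)
      (Eventually.of_forall (hbound z w))).trans_eq ?_
    rw [integral_const_mul, heq, ← hJ]
    ring
  · intro x
    have hcoord : ∀ (i : Fin 2) (ξ : EuclideanSpace ℝ (Fin 2)), |ξ i| ≤ ‖ξ‖ := fun i ξ => by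
      simpa using PiLp.norm_apply_le ξ i
    have hcs : ∀ i : Fin 2, ContDiff ℝ (⊤ : ℕ∞) fun ξ : EuclideanSpace ℝ (Fin 2) => χ (ξ i) :=
      fun i => hχs.comp (by fun_prop)
    rw [hf.apply_eq_integral (χ := fun ξ => χ (ξ 0) * χ (ξ 1)) ((hcs 0).mul (hcs 1)) ?_
      isOpen_ball ha ?_ x]
    · refine integral_congr_ae (Eventually.of_forall fun y => ?_)
      simp only
      rw [fourier_mul_cexp_eq_fourierLaplace]
    · refine HasCompactSupport.intro (isCompact_closedBall 0 (2 * (a + 1))) fun ξ hξ => ?_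
      by_contra hne
      refine hξ ?_
      have h0 := not_lt.1 fun h => left_ne_zero_of_mul hne (hχ0 _ h)
      have h1 := not_lt.1 fun h => right_ne_zero_of_mul hne (hχ0 _ h)
      rw [mem_closedBall_zero_iff, EuclideanSpace.norm_eq, Fin.sum_univ_two]
      refine Real.sqrt_le_iff.2 ⟨by positivity, ?_⟩
      rw [Real.norm_eq_abs, Real.norm_eq_abs]
      nlinarith [abs_nonneg (ξ 0), abs_nonneg (ξ 1)]
    · intro ξ hξ
      have hone : ∀ i : Fin 2, χ (ξ i) = 1 := fun i => by
        have : β (ξ i) = 1 := β.one_of_mem_closedBall (by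
          rw [mem_closedBall_zero_iff]
          exact (hcoord i ξ).trans (mem_ball_zero_iff.1 hξ).le)
        simp only [hχ, this, Complex.ofReal_one]
      simp only [hone, mul_one]

theorem IsExpType.translate {A C M : ℝ} {F : ℂ → ℂ → ℂ} (hM : 0 < M) (hF : IsExpType A (M * C) F)
    (s t : ℝ) : IsExpType A C fun z w => (M : ℂ)⁻¹ * F (s + z) (t + w) := by
  refine ⟨fun g h hg hh => ?_, fun z w => ?_⟩
  · exact (hF.1 _ _ (hg.const_add _) (hh.const_add _)).const_mul _
  · have := hF.2 (s + z) (t + w)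
    simp only [Complex.add_im, Complex.ofReal_im, zero_add] at this
    rw [norm_mul, norm_inv, Complex.norm_real, Real.norm_of_nonneg hM.le,
      inv_mul_le_iff₀ hM, ← mul_assoc]
    exact this

theorem isSamplingSet_of_relativelyDense {Ω : Set (EuclideanSpace ℝ (Fin 2))} (hΩ : IsCompact Ω)
    {r : ℝ} (hr : 0 < r) {Λ : Set (EuclideanSpace ℝ (Fin 2))} {R₀ : ℝ} (hR₀ : 0 < R₀)
    (hΛ : ∀ x, ∃ v ∈ Λ, dist v x ≤ R₀) :
    IsSamplingSet Ω (Λ + sphere (0 : EuclideanSpace ℝ (Fin 2)) r) := by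
  obtain ⟨A, hA, C, hC, hext⟩ := exists_isExpType_extension hΩ
  by_contra hcon
  unfold IsSamplingSet at hcon
  push Not at hcon
  choose f hf x hx using fun n : ℕ => hcon ((n : ℝ) + 1) (by positivity)
  have hbdd : ∀ n, BddAbove (Set.range fun y => ‖f n y‖) := fun n => by
    obtain ⟨M, hM⟩ := (hf n).2.1
    exact ⟨M, by rintro _ ⟨y, rfl⟩; exact hM y⟩
  set M : ℕ → ℝ := fun n => ⨆ y, ‖f n y‖ with hM
  have hle : ∀ n y, ‖f n y‖ ≤ M n := fun n y => le_ciSup (hbdd n) y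
  have hsup0 : ∀ n, 0 ≤ sSup ((fun p => ‖f n p‖) ''
      (Λ + sphere (0 : EuclideanSpace ℝ (Fin 2)) r)) := fun n =>
    Real.sSup_nonneg (by rintro _ ⟨y, -, rfl⟩; exact norm_nonneg _)
  have hMpos : ∀ n, 0 < M n := fun n =>
    (mul_nonneg (by positivity) (hsup0 n)).trans_lt ((hx n).trans_le (hle n _))
  have hz : ∀ n, ∃ z, M n / 2 < ‖f n z‖ := fun n =>
    exists_lt_of_lt_ciSup (half_lt_self (hMpos n))
  choose z hz using hz
  choose F hF hFf using fun n => hext (f n) (hf n) (M n) (hle n)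
  refine false_of_isExpType_of_tendsto hA hC
    (fun n => (hF n).translate (hMpos n) (z n 0) (z n 1)) hr hR₀
    (W := fun n => (fun v : EuclideanSpace ℝ (Fin 2) => (v 0 - z n 0, v 1 - z n 1)) '' Λ)
    (fun n s t => ?_) tendsto_one_div_add_atTop_nhds_zero_nat ?_ fun n => ?_
  · obtain ⟨v, hv, hvd⟩ := hΛ (!₂[s, t] + z n)
    have hcoord : ∀ i : Fin 2, |v i - (!₂[s, t] + z n) i| ≤ R₀ := fun i => by
      have := PiLp.norm_apply_le (v - (!₂[s, t] + z n)) i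
      rw [dist_eq_norm] at hvd
      exact this.trans hvd
    refine ⟨_, ⟨v, hv, rfl⟩, ?_, ?_⟩
    · have := hcoord 0
      simp only [PiLp.add_apply, Matrix.cons_val_zero] at this
      rwa [sub_sub, add_comm]
    · have := hcoord 1
      simp only [PiLp.add_apply, Matrix.cons_val_one] at this
      rwa [sub_sub, add_comm]
  · rintro n _ ⟨v, hv, rfl⟩ θ
    set c : EuclideanSpace ℝ (Fin 2) := !₂[r * Real.cos θ, r * Real.sin θ] with hc
    have hcs : c ∈ sphere (0 : EuclideanSpace ℝ (Fin 2)) r := by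
      rw [mem_sphere_zero_iff_norm, EuclideanSpace.norm_eq, Fin.sum_univ_two, hc]
      simp only [Matrix.cons_val_zero, Matrix.cons_val_one, Real.norm_eq_abs, sq_abs]
      rw [mul_pow, mul_pow, ← mul_add, Real.cos_sq_add_sin_sq, mul_one, Real.sqrt_sq hr.le]
    have h1 := hFf n (v + c)
    simp only [PiLp.add_apply, hc, Matrix.cons_val_zero, Matrix.cons_val_one] at h1
    have h2 : ‖f n (v + c)‖ ≤
        sSup ((fun p => ‖f n p‖) '' (Λ + sphere (0 : EuclideanSpace ℝ (Fin 2)) r)) :=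
      le_csSup ((hbdd n).mono (Set.image_subset_range _ _)) ⟨_, Set.add_mem_add hv hcs, rfl⟩
    have h3 : ((n : ℝ) + 1) * ‖f n (v + c)‖ ≤ M n :=
      (mul_le_mul_of_nonneg_left h2 (by positivity)).trans ((hx n).le.trans (hle n _))
    simp only
    rw [norm_mul, norm_inv, Complex.norm_real, Real.norm_of_nonneg (hMpos n).le,
      inv_mul_le_iff₀ (hMpos n), ← Complex.ofReal_add, ← Complex.ofReal_add]
    have e : ∀ p q s : ℝ, p + (q - p + s) = q + s := fun p q s => by ring
    rw [e, e, h1, ← hc, mul_one_div, le_div_iff₀ (by positivity), mul_comm]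
    exact h3
  · simp only [add_zero]
    rw [hFf, norm_mul, norm_inv, Complex.norm_real, Real.norm_of_nonneg (hMpos n).le,
      le_inv_mul_iff₀ (hMpos n)]
    have := hz n
    linarith

/-- A nonzero function in a Bernstein space which tends to zero at infinity, translated. -/
theorem exists_memBernstein_decay {E : Type*} [NormedAddCommGroup E] [InnerProductSpace ℝ E]
    [FiniteDimensional ℝ E] [MeasurableSpace E] [BorelSpace E] {Ω : Set E}
    (hΩ : (interior Ω).Nonempty) :
    ∃ c > 0, ∃ K ≥ 0, ∀ x : E, ∃ f : E → ℂ, MemBernstein Ω f ∧ ‖f x‖ = c ∧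
      ∀ y, ‖y - x‖ * ‖f y‖ ≤ K := by
  obtain ⟨ω, hω⟩ := hΩ
  obtain ⟨ρ, hρ, hρΩ⟩ := Metric.isOpen_iff.1 isOpen_interior ω hω
  let b : ContDiffBump ω := ⟨ρ / 4, ρ / 2, by positivity, by linarith⟩
  have hbΩ : tsupport b ⊆ Ω := by
    rw [b.tsupport_eq]
    exact (closedBall_subset_ball (half_lt_self hρ)).trans (hρΩ.trans interior_subset)
  set η : E → ℂ := fun ξ => ((b ξ : ℝ) : ℂ) with hη
  have hηs : ContDiff ℝ (⊤ : ℕ∞) η := Complex.ofRealCLM.contDiff.comp b.contDiff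
  have hηc : HasCompactSupport η := b.hasCompactSupport.comp_left Complex.ofReal_zero
  set N : SchwartzMap E ℂ := hηc.toSchwartzMap hηs with hN
  obtain ⟨K, hK⟩ := (𝓕⁻ N).decay 1 0
  simp only [pow_one, norm_iteratedFDeriv_zero] at hK
  have htrans : ∀ x y : E, 𝓕⁻ (fun ξ => Complex.exp ((-(2 * Real.pi * ⟪ξ, x⟫) : ℝ) * Complex.I) *
      η ξ) y = (𝓕⁻ N) (y - x) := by
    intro x y
    rw [SchwartzMap.fourierInv_coe, Real.fourierInv_eq', Real.fourierInv_eq']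
    refine integral_congr_ae (Eventually.of_forall fun ξ => ?_)
    simp only [smul_eq_mul]
    rw [← mul_assoc, ← Complex.exp_add, ← add_mul, ← Complex.ofReal_add, inner_sub_right]
    change _ = _ * η ξ
    congr 4
    ring
  have hc : 0 < ‖(𝓕⁻ N) 0‖ := by
    rw [norm_pos_iff, SchwartzMap.fourierInv_coe, Real.fourierInv_eq']
    simp only [inner_zero_right, mul_zero, Complex.ofReal_zero, zero_mul, Complex.exp_zero,
      one_smul]
    change ∫ ξ, ((b ξ : ℝ) : ℂ) ≠ 0
    rw [integral_complex_ofReal]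
    exact_mod_cast b.integral_pos.ne'
  refine ⟨‖(𝓕⁻ N) 0‖, hc, K, hK.1.le, fun x => ?_⟩
  set g : E → ℂ := fun ξ => Complex.exp ((-(2 * Real.pi * ⟪ξ, x⟫) : ℝ) * Complex.I) * η ξ with hg
  have hgs : ContDiff ℝ (⊤ : ℕ∞) g := by
    refine ContDiff.mul (ContDiff.cexp
      (ContDiff.mul (Complex.ofRealCLM.contDiff.comp (ContDiff.neg ?_)) contDiff_const)) hηs
    exact contDiff_const.mul (contDiff_id.inner ℝ contDiff_const)
  have hgc : HasCompactSupport g := hηc.mul_left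
  set G : SchwartzMap E ℂ := hgc.toSchwartzMap hgs with hG
  have hGN : ∀ y, (𝓕⁻ G) y = (𝓕⁻ N) (y - x) := fun y => by
    rw [← htrans, SchwartzMap.fourierInv_coe]
    rfl
  let F : SchwartzMap E ℂ := 𝓕⁻ G
  refine ⟨F, ⟨F.continuous, ?_, fun ψ hψs hψc hψ => ?_⟩, ?_, fun y => ?_⟩
  · obtain ⟨B, hB⟩ := F.decay 0 0
    refine ⟨B, fun y => ?_⟩
    simpa using hB.2 y
  · have h := SchwartzMap.integral_fourier_mul_eq (𝓕⁻ G) (hψc.toSchwartzMap hψs)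
    rw [FourierTransform.fourier_fourierInv_eq] at h
    refine Eq.trans h.symm ?_
    refine integral_eq_zero_of_ae (Eventually.of_forall fun ξ => ?_)
    change g ξ * ψ ξ = 0
    by_cases hξ : ξ ∈ tsupport ψ
    · have h1 : ξ ∉ tsupport b := fun h2 => by
        have : ξ ∈ tsupport ψ ∩ Ω := ⟨hξ, hbΩ h2⟩
        rwa [hψ] at this
      simp only [hg, hη, image_eq_zero_of_notMem_tsupport h1, Complex.ofReal_zero, mul_zero,
        zero_mul]
    · rw [image_eq_zero_of_notMem_tsupport hξ, mul_zero]
  · rw [hGN, sub_self]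
  · rw [hGN]
    exact hK.2 (y - x)

theorem IsSamplingSet.exists_relativelyDense {E : Type*} [NormedAddCommGroup E]
    [InnerProductSpace ℝ E] [FiniteDimensional ℝ E] [MeasurableSpace E] [BorelSpace E] {Ω : Set E}
    (hΩ : (interior Ω).Nonempty) {Λ : Set E} {r : ℝ} (hr : 0 < r)
    (h : IsSamplingSet Ω (Λ + sphere (0 : E) r)) : ∃ R₀ > 0, ∀ x, ∃ v ∈ Λ, dist v x ≤ R₀ := by
  obtain ⟨c, hc, K, hK, hdecay⟩ := exists_memBernstein_decay hΩ
  obtain ⟨C, hC, hs⟩ := h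
  refine ⟨r + (C * K + 1) / c, by positivity, fun x => ?_⟩
  by_contra! hfar
  obtain ⟨f, hf, hfx, hfd⟩ := hdecay x
  have h1 := hs f hf x
  set D := (C * K + 1) / c with hD
  have hDpos : 0 < D := by positivity
  have h2 : sSup ((fun p => ‖f p‖) '' (Λ + sphere (0 : E) r)) ≤ K / D := by
    refine Real.sSup_le ?_ (by positivity)
    rintro _ ⟨_, ⟨v, hv, t, ht, rfl⟩, rfl⟩
    rw [le_div_iff₀ hDpos, mul_comm]
    refine le_trans ?_ (hfd (v + t))
    gcongr
    have h3 := hfar v hv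
    rw [dist_eq_norm] at h3
    rw [mem_sphere_zero_iff_norm] at ht
    have h4 := norm_sub_le (v + t - x) t
    have h5 : v + t - x - t = v - x := by abel
    rw [h5] at h4
    linarith
  rw [hfx] at h1
  have h6 : c ≤ C * (K / D) := h1.trans (by gcongr)
  rw [hD] at h6
  have h7 : C * (K / ((C * K + 1) / c)) = c * (C * K / (C * K + 1)) := by
    field_simp
  rw [h7] at h6
  have h8 : C * K / (C * K + 1) < 1 := by
    rw [div_lt_one (by positivity)]
    linarith
  nlinarith

theorem exists_relativelyDense_of_lowerUniformDensity_pos {E : Type*} [NormedAddCommGroup E]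
    [MeasureSpace E] {Λ : Set E} (h : 0 < lowerUniformDensity Λ) :
    ∃ R₀ > 0, ∀ x, ∃ v ∈ Λ, dist v x ≤ R₀ := by
  have hb : IsBoundedUnder (· ≥ ·) atTop (fun r : ℝ => ⨅ x : E,
      (Nat.card ↥(Λ ∩ closedBall x r) : ℝ) / (volume (closedBall x r)).toReal) :=
    isBoundedUnder_of ⟨0, fun r => Real.iInf_nonneg fun x => by positivity⟩
  obtain ⟨R, hR, hR0⟩ := ((eventually_lt_of_lt_liminf h hb).and (eventually_gt_atTop 0)).exists
  refine ⟨R, hR0, fun x => ?_⟩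
  have h1 : 0 < (Nat.card ↥(Λ ∩ closedBall x R) : ℝ) / (volume (closedBall x R)).toReal :=
    hR.trans_le (ciInf_le ⟨0, by rintro _ ⟨y, rfl⟩; positivity⟩ x)
  have h2 : Nat.card ↥(Λ ∩ closedBall x R) ≠ 0 := fun h0 => by
    rw [h0, Nat.cast_zero, zero_div] at h1
    exact h1.false
  obtain ⟨⟨v, hv, hvx⟩⟩ := (Nat.card_ne_zero.1 h2).1
  exact ⟨v, hv, hvx⟩

theorem UniformlyDiscrete.card_mul_volume_le {E : Type*} [NormedAddCommGroup E] [NormedSpace ℝ E]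
    [FiniteDimensional ℝ E] [MeasureSpace E] [BorelSpace E]
    {Λ : Set E} {δ : ℝ} (hδ : ∀ x ∈ Λ, ∀ y ∈ Λ, x ≠ y → δ ≤ dist x y)
    (x : E) (R : ℝ) (S : Finset E) (hS : (S : Set E) ⊆ Λ ∩ closedBall x R) :
    ∑ v ∈ S, volume (ball v (δ / 2)) ≤ volume (closedBall x (R + δ / 2)) := by
  rw [← measure_biUnion_finset (fun v hv w hw hvw => ?_) (fun _ _ => measurableSet_ball)]
  · refine measure_mono (Set.iUnion₂_subset fun v hv => ?_)
    refine (ball_subset_closedBall).trans (closedBall_subset_closedBall' ?_)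
    have := mem_closedBall.1 (hS hv).2
    linarith
  · refine ball_disjoint_ball ?_
    have := hδ v (hS hv).1 w (hS hw).1 hvw
    linarith

theorem UniformlyDiscrete.lowerUniformDensity_pos {Λ : Set (EuclideanSpace ℝ (Fin 2))}
    (hΛ : UniformlyDiscrete Λ) {R₀ : ℝ} (hR₀ : 0 < R₀) (hd : ∀ x, ∃ v ∈ Λ, dist v x ≤ R₀) :
    0 < lowerUniformDensity Λ := by
  obtain ⟨δ, hδ, hsep⟩ := hΛ
  have hvol : ∀ (x : EuclideanSpace ℝ (Fin 2)) {R : ℝ}, 0 ≤ R →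
      volume.real (closedBall x R) = R ^ 2 * Real.pi := by
    intro x R hR
    rw [measureReal_def, EuclideanSpace.volume_closedBall_fin_two, ENNReal.toReal_mul]
    simp [hR, Real.pi_pos.le]
  have hvolb : ∀ (x : EuclideanSpace ℝ (Fin 2)) {R : ℝ}, 0 ≤ R →
      volume.real (ball x R) = R ^ 2 * Real.pi := by
    intro x R hR
    rw [measureReal_def, EuclideanSpace.volume_ball_fin_two, ENNReal.toReal_mul]
    simp [hR, Real.pi_pos.le]
  have hpi := Real.pi_pos
  have hcard : ∀ x {R : ℝ}, 0 ≤ R → ∀ S : Finset (EuclideanSpace ℝ (Fin 2)),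
      (S : Set _) ⊆ Λ ∩ closedBall x R → (S.card : ℝ) ≤ (R + δ / 2) ^ 2 / (δ / 2) ^ 2 := by
    intro x R hR S hS
    have h := ENNReal.toReal_mono measure_closedBall_lt_top.ne
      (UniformlyDiscrete.card_mul_volume_le hsep x R S hS)
    rw [ENNReal.toReal_sum fun v _ => measure_ball_lt_top.ne] at h
    simp_rw [← measureReal_def] at h
    rw [hvol _ (by positivity), Finset.sum_congr rfl fun v _ => hvolb v (half_pos hδ).le,
      Finset.sum_const, nsmul_eq_mul, ← mul_assoc] at h
    rw [le_div_iff₀ (by positivity)]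
    exact le_of_mul_le_mul_right h hpi
  have hfin : ∀ x {R : ℝ}, 0 ≤ R → (Λ ∩ closedBall x R).Finite := by
    intro x R hR
    by_contra hinf
    obtain ⟨n, hn⟩ := exists_nat_gt ((R + δ / 2) ^ 2 / (δ / 2) ^ 2)
    obtain ⟨S, hS, hSn⟩ := Set.Infinite.exists_subset_card_eq hinf n
    have := hcard x hR S hS
    rw [hSn] at this
    linarith
  have hncard : ∀ x {R : ℝ} (hR : 0 ≤ R),
      Nat.card ↥(Λ ∩ closedBall x R) = (hfin x hR).toFinset.card := fun x R hR =>
    Nat.card_eq_card_finite_toFinset _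
  set c := 1 / (4 * R₀ ^ 2 * Real.pi) with hc
  have hc0 : 0 < c := by positivity
  have hlow : ∀ R, 2 * R₀ ≤ R → ∀ x : EuclideanSpace ℝ (Fin 2),
      c ≤ (Nat.card ↥(Λ ∩ closedBall x R) : ℝ) / (volume (closedBall x R)).toReal := by
    intro R hR x
    have hR0 : 0 < R := by linarith
    have hcov : closedBall x (R - R₀) ⊆
        ⋃ v ∈ (hfin x hR0.le).toFinset, closedBall v R₀ := by
      intro y hy
      obtain ⟨v, hv, hvy⟩ := hd y
      refine Set.mem_iUnion₂.2 ⟨v, ?_, ?_⟩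
      · rw [Set.Finite.mem_toFinset]
        refine ⟨hv, ?_⟩
        have h1 := dist_triangle v y x
        rw [mem_closedBall] at hy ⊢
        linarith
      · rwa [mem_closedBall, dist_comm]
    have h1 := (measure_mono hcov).trans (measure_biUnion_finset_le (μ := volume) _ _)
    have h2 := ENNReal.toReal_mono
      (ENNReal.sum_ne_top.2 fun v _ => measure_closedBall_lt_top.ne) h1
    rw [ENNReal.toReal_sum fun v _ => measure_closedBall_lt_top.ne] at h2
    simp_rw [← measureReal_def] at h2 ⊢
    rw [hvol _ (by linarith), Finset.sum_congr rfl fun v _ => hvol v hR₀.le, Finset.sum_const,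
      nsmul_eq_mul, ← mul_assoc] at h2
    have h3 := le_of_mul_le_mul_right h2 hpi
    rw [hncard x hR0.le, hvol _ hR0.le, hc, div_le_div_iff₀ (by positivity) (by positivity)]
    have h4 : R ^ 2 ≤ 4 * (R - R₀) ^ 2 := by nlinarith
    nlinarith
  have hcob : IsCoboundedUnder (· ≥ ·) atTop (fun r : ℝ => ⨅ x : EuclideanSpace ℝ (Fin 2),
      (Nat.card ↥(Λ ∩ closedBall x r) : ℝ) / (volume (closedBall x r)).toReal) := by
    refine IsBoundedUnder.isCoboundedUnder_ge
      ⟨4 / ((δ / 2) ^ 2 * Real.pi), eventually_map.2 ?_⟩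
    filter_upwards [eventually_ge_atTop δ] with R hR
    have hR0 : 0 < R := by linarith
    refine (ciInf_le ⟨0, by rintro _ ⟨y, rfl⟩; positivity⟩ 0).trans ?_
    have h1 := hcard 0 hR0.le (hfin 0 hR0.le).toFinset (by simp)
    rw [← measureReal_def, hvol _ hR0.le, hncard 0 hR0.le,
      div_le_div_iff₀ (by positivity) (by positivity)]
    rw [le_div_iff₀ (by positivity)] at h1
    have h2 : (R + δ / 2) ^ 2 ≤ 4 * R ^ 2 := by nlinarith
    nlinarith
  refine hc0.trans_le (le_liminf_of_le hcob ?_)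
  filter_upwards [eventually_ge_atTop (2 * R₀)] with R hR
  exact le_ciInf (hlow R hR)

/-- Theorem 4 (translations of a circle): `P = V + T` is a sampling set for `B_Ω`
iff `D⁻(V) > 0`. -/
theorem translated_circles_sampling
    (Ω : Set (EuclideanSpace ℝ (Fin 2))) (hΩcompact : IsCompact Ω) (hΩconvex : Convex ℝ Ω)
    (hΩpos : 0 < volume Ω)
    (r : ℝ) (hr : 0 < r)
    (V : Set (EuclideanSpace ℝ (Fin 2))) (hV : UniformlyDiscrete V)
    (P : Set (EuclideanSpace ℝ (Fin 2)))
    (hP : P = V + sphere (0 : EuclideanSpace ℝ (Fin 2)) r) :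
    IsSamplingSet Ω P ↔ 0 < lowerUniformDensity V := by
  subst hP
  constructor
  · intro h
    have h_int : (interior Ω).Nonempty := by
      by_contra hempty
      have h0 := hΩconvex.addHaar_frontier (volume : Measure (EuclideanSpace ℝ (Fin 2)))
      rw [frontier, Set.not_nonempty_iff_eq_empty.1 hempty, Set.sdiff_empty,
        hΩcompact.isClosed.closure_eq] at h0
      exact hΩpos.ne' h0
    obtain ⟨R₀, hR₀, hd⟩ := h.exists_relativelyDense h_int hr
    exact hV.lowerUniformDensity_pos hR₀ hd
  · intro h
    obtain ⟨R₀, hR₀, hd⟩ := exists_relativelyDense_of_lowerUniformDensity_pos h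
    exact isSamplingSet_of_relativelyDense hΩcompact hr hR₀ hd
end
end

section
/- Let Ω ⊂ ℝ^d (d ≥ 1) be a compact set and assume P ⊂ ℝ^d is a sampling set for B_Ω. Then there exists η > 0 such that every subset Λ ⊂ P satisfying P ⊂ Λ + B_η(0) (i.e., every point of P is within distance η of Λ) is also a sampling set for B_Ω. -/
open MeasureTheory FourierTransform Filter Metric
open scoped Pointwise RealInnerProductSpace ENNReal NNReal

noncomputable section

variable {V : Type*} [NormedAddCommGroup V] [InnerProductSpace ℝ V]
  [FiniteDimensional ℝ V] [MeasurableSpace V] [BorelSpace V]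

open scoped SchwartzMap Topology

/-- The Fourier transform of a dilated and modulated function. -/
theorem fourier_modulate_dilate (χ : V → ℂ) (x y : V) {ε : ℝ} (hε : 0 < ε) :
    𝓕 (fun v => Real.fourierChar ⟪v, x⟫ • χ (ε • v)) y =
      |(ε ^ Module.finrank ℝ V)⁻¹| • 𝓕 χ (ε⁻¹ • (y - x)) := by
  rw [Real.fourier_eq, Real.fourier_eq, ← Measure.integral_comp_smul]
  refine integral_congr_ae (Eventually.of_forall fun v => ?_)
  simp only [smul_smul, ← AddChar.map_add_eq_mul]
  congr 2
  rw [inner_smul_left, inner_smul_right, inner_sub_right]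
  simp only [conj_trivial]
  field_simp
  ring

theorem integral_mul_fourier_modulate_dilate (f χ : V → ℂ) (x : V) {ε : ℝ} (hε : 0 < ε) :
    ∫ y, f y * 𝓕 (fun v => Real.fourierChar ⟪v, x⟫ • χ (ε • v)) y =
      ∫ z, f (x + ε • z) * 𝓕 χ z := by
  have h := Measure.integral_comp_smul volume (fun y => f (x + y) * 𝓕 χ (ε⁻¹ • y)) ε
  simp only [inv_smul_smul₀ hε.ne'] at h
  rw [h, ← integral_smul, ← integral_add_left_eq_self _ x]
  refine integral_congr_ae (Eventually.of_forall fun y => ?_)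
  simp only [fourier_modulate_dilate χ x _ hε, add_sub_cancel_left, mul_smul_comm]

omit [FiniteDimensional ℝ V] [MeasurableSpace V] [BorelSpace V] in
theorem contDiff_modulate_dilate {χ : V → ℂ} (hχ : ContDiff ℝ (⊤ : ℕ∞) χ) (x : V) (ε : ℝ) :
    ContDiff ℝ (⊤ : ℕ∞) (fun v => Real.fourierChar ⟪v, x⟫ • χ (ε • v)) := by
  simp only [Circle.smul_def, Real.fourierChar_apply, smul_eq_mul]
  have h : ContDiff ℝ (⊤ : ℕ∞) (fun v : V => ((2 * Real.pi * ⟪v, x⟫ : ℝ) : ℂ)) :=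
    Complex.ofRealCLM.contDiff.comp
      (contDiff_const.mul (contDiff_id.inner ℝ contDiff_const))
  fun_prop

omit [FiniteDimensional ℝ V] [MeasurableSpace V] [BorelSpace V] in
theorem hasCompactSupport_modulate_dilate {χ : V → ℂ} (hχ : HasCompactSupport χ) (x : V)
    {ε : ℝ} (hε : 0 < ε) :
    HasCompactSupport (fun v => Real.fourierChar ⟪v, x⟫ • χ (ε • v)) := by
  refine (hχ.comp_smul hε.ne').mono fun v hv => ?_
  contrapose! hv
  simp only [Function.mem_support, not_not] at hv ⊢
  simp [hv]

theorem integrable_comp_mul_schwartz {f : V → ℂ} (hf : Continuous f) {M : ℝ}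
    (hM : ∀ x, ‖f x‖ ≤ M) (K : 𝓢(V, ℂ)) (x : V) (ε : ℝ) :
    Integrable (fun z => f (x + ε • z) * K z) :=
  K.integrable.bdd_mul (c := M) (by fun_prop) (Eventually.of_forall fun _ => hM _)

/-- Averages of a Bernstein function against dilates of the Fourier transform of a cutoff do not
depend on the dilation, as long as the dilated cutoff equals `1` near `Ω`. -/
theorem MemBernstein.integral_comp_mul_eq {Ω : Set V} {f : V → ℂ} (hf : MemBernstein Ω f)
    (χ : 𝓢(V, ℂ)) (hχ : HasCompactSupport χ) (hχ1 : ∀ v, ‖v‖ < 1 → χ v = 1) {ε₀ ε : ℝ}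
    (hε : 0 < ε) (hεε₀ : ε ≤ ε₀) (hΩ : Ω ⊆ ball 0 ε₀⁻¹) (x : V) :
    ∫ z, f (x + ε • z) * 𝓕 χ z = ∫ z, f (x + ε₀ • z) * 𝓕 χ z := by
  obtain ⟨hfc, ⟨M, hM⟩, hf0⟩ := hf
  have hε₀ : 0 < ε₀ := hε.trans_le hεε₀
  set ψ : ℝ → V → ℂ := fun δ v => Real.fourierChar ⟪v, x⟫ • χ (δ • v) with hψ
  have hsmooth : ∀ δ, ContDiff ℝ (⊤ : ℕ∞) (ψ δ) :=
    fun δ => contDiff_modulate_dilate (χ.smooth _) x δ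
  have hsupp : ∀ δ, 0 < δ → HasCompactSupport (ψ δ) :=
    fun δ hδ => hasCompactSupport_modulate_dilate hχ x hδ
  have hint : ∀ δ, 0 < δ → Integrable (ψ δ) :=
    fun δ hδ => (hsmooth δ).continuous.integrable_of_hasCompactSupport (hsupp δ hδ)
  have hprod : ∀ δ, 0 < δ → Integrable (fun y => f y * 𝓕 (ψ δ) y) := by
    intro δ hδ
    let S : 𝓢(V, ℂ) := (hsupp δ hδ).toSchwartzMap (hsmooth δ)
    have := integrable_comp_mul_schwartz hfc hM (𝓕 S) 0 1
    simp only [zero_add, one_smul] at this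
    exact this
  have hker : ∫ y, f y * 𝓕 (ψ ε - ψ ε₀) y = 0 := by
    refine hf0 _ ((hsmooth ε).sub (hsmooth ε₀)) ((hsupp ε hε).sub (hsupp ε₀ hε₀)) ?_
    have hzero : ∀ v ∈ ball (0 : V) ε₀⁻¹, (ψ ε - ψ ε₀) v = 0 := by
      intro v hv
      rw [mem_ball_zero_iff] at hv
      have key : ∀ δ, 0 < δ → δ ≤ ε₀ → χ (δ • v) = 1 := by
        intro δ hδ hδ'
        refine hχ1 _ ?_
        rw [norm_smul, Real.norm_of_nonneg hδ.le]
        calc δ * ‖v‖ ≤ ε₀ * ‖v‖ := by gcongr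
          _ < ε₀ * ε₀⁻¹ := by gcongr
          _ = 1 := mul_inv_cancel₀ hε₀.ne'
      simp [hψ, key ε hε hεε₀, key ε₀ hε₀ le_rfl]
    have hts : tsupport (ψ ε - ψ ε₀) ⊆ (ball (0 : V) ε₀⁻¹)ᶜ :=
      closure_minimal (fun v hv hv' => hv (hzero v hv')) isOpen_ball.isClosed_compl
    exact Set.eq_empty_of_forall_notMem fun v hv => hts hv.1 (hΩ hv.2)
  have hsub : ∀ y, f y * 𝓕 (ψ ε - ψ ε₀) y = f y * 𝓕 (ψ ε) y - f y * 𝓕 (ψ ε₀) y := by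
    intro y
    rw [← mul_sub]
    congr 1
    simp only [Real.fourier_eq]
    rw [← integral_sub]
    · simp only [Pi.sub_apply, smul_sub]
    · exact (Real.fourierIntegral_convergent_iff y).2 (hint ε hε)
    · exact (Real.fourierIntegral_convergent_iff y).2 (hint ε₀ hε₀)
  simp only [hsub] at hker
  rw [integral_sub (hprod ε hε) (hprod ε₀ hε₀), sub_eq_zero,
    integral_mul_fourier_modulate_dilate f χ x hε,
    integral_mul_fourier_modulate_dilate f χ x hε₀] at hker
  exact hker

/-- The reproducing formula for Bernstein functions. -/
theorem MemBernstein.eq_integral {Ω : Set V} {f : V → ℂ} (hf : MemBernstein Ω f)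
    (χ : 𝓢(V, ℂ)) (hχ : HasCompactSupport χ) (hχ1 : ∀ v, ‖v‖ < 1 → χ v = 1) {ε₀ : ℝ}
    (hε₀ : 0 < ε₀) (hΩ : Ω ⊆ ball 0 ε₀⁻¹) (x : V) :
    f x = ∫ z, f (x + ε₀ • z) * 𝓕 χ z := by
  obtain ⟨hfc, ⟨M, hM⟩, -⟩ := id hf
  have hmean : ∫ z, 𝓕 χ z = 1 := by
    have h : 𝓕⁻ (𝓕 χ) 0 = χ 0 := by rw [FourierTransform.fourierInv_fourier_eq]
    rw [hχ1 0 (by simp), SchwartzMap.fourierInv_coe, Real.fourierInv_eq] at h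
    simpa using h
  have hlim : Tendsto (fun ε : ℝ => ∫ z, f (x + ε • z) * 𝓕 χ z) (𝓝[>] 0) (𝓝 (f x)) := by
    have hx : f x = ∫ z, f x * 𝓕 χ z := by rw [integral_const_mul, hmean, mul_one]
    rw [hx]
    refine tendsto_integral_filter_of_dominated_convergence (fun z => M * ‖𝓕 χ z‖)
      (Eventually.of_forall fun ε =>
        (integrable_comp_mul_schwartz hfc hM (𝓕 χ) x ε).aestronglyMeasurable)
      (Eventually.of_forall fun ε => Eventually.of_forall fun z => ?_)
      ((𝓕 χ).integrable.norm.const_mul M) (Eventually.of_forall fun z => ?_)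
    · rw [norm_mul]
      gcongr
      exact hM _
    · have hc : Continuous fun ε : ℝ => f (x + ε • z) * 𝓕 χ z := by fun_prop
      simpa using (hc.tendsto 0).mono_left nhdsWithin_le_nhds
  refine tendsto_nhds_unique hlim (tendsto_const_nhds.congr' (EventuallyEq.symm ?_))
  filter_upwards [Ioc_mem_nhdsGT hε₀] with ε hε
  exact hf.integral_comp_mul_eq χ hχ hχ1 hε.1 hε.2 hΩ x

/-- Translation is continuous in the `L¹` norm on Schwartz functions. -/
theorem SchwartzMap.tendsto_integral_norm_translate_sub (K : 𝓢(V, ℂ)) :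
    Tendsto (fun h : V => ∫ z, ‖K (z - h) - K z‖) (𝓝 0) (𝓝 0) := by
  set N : ℕ := Module.finrank ℝ V + 1
  obtain ⟨C, hC⟩ : ∃ C : ℝ, ∀ z, (1 + ‖z‖) ^ N * ‖K z‖ ≤ C := by
    refine ⟨2 ^ N * (Finset.Iic (N, 0)).sup (fun m => SchwartzMap.seminorm ℝ m.1 m.2) K,
      fun z => ?_⟩
    have := SchwartzMap.one_add_le_sup_seminorm_apply (𝕜 := ℝ) (m := (N, 0)) le_rfl le_rfl K z
    rwa [norm_iteratedFDeriv_zero] at this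
  have hz : (0 : ℝ) = ∫ z : V, (0 : ℝ) := by simp
  rw [hz]
  refine tendsto_integral_filter_of_dominated_convergence
    (fun z => 2 ^ N * C * (1 + ‖z‖) ^ (-(N : ℝ)) + ‖K z‖)
    (Eventually.of_forall fun h => by fun_prop) ?_ ?_ (Eventually.of_forall fun z => ?_)
  · filter_upwards [ball_mem_nhds (0 : V) one_pos] with h hh
    refine Eventually.of_forall fun z => ?_
    rw [mem_ball_zero_iff] at hh
    rw [norm_norm]
    refine (norm_sub_le _ _).trans (add_le_add_left ?_ _)
    rw [Real.rpow_neg (by positivity), Real.rpow_natCast, ← div_eq_mul_inv,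
      le_div_iff₀ (by positivity)]
    have hle : 1 + ‖z‖ ≤ 2 * (1 + ‖z - h‖) := by
      have h1 : ‖z‖ ≤ ‖z - h‖ + ‖h‖ := by simpa using norm_add_le (z - h) h
      linarith [norm_nonneg (z - h)]
    calc ‖K (z - h)‖ * (1 + ‖z‖) ^ N
        ≤ ‖K (z - h)‖ * (2 * (1 + ‖z - h‖)) ^ N := by gcongr
      _ = 2 ^ N * ((1 + ‖z - h‖) ^ N * ‖K (z - h)‖) := by rw [mul_pow]; ring
      _ ≤ 2 ^ N * C := by gcongr; exact hC _
  · refine ((integrable_one_add_norm ?_).const_mul _).add K.integrable.norm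
    simp [N]
  · have hc : Continuous fun h : V => ‖K (z - h) - K z‖ := by fun_prop
    simpa using hc.tendsto 0

omit [MeasurableSpace V] [BorelSpace V] in
theorem SchwartzMap.exists_hasCompactSupport_eq_one :
    ∃ χ : 𝓢(V, ℂ), HasCompactSupport χ ∧ ∀ v, ‖v‖ < 1 → χ v = 1 := by
  obtain ⟨b, hb⟩ : ∃ b : ContDiffBump (0 : V), b.rIn = 1 :=
    ⟨⟨1, 2, one_pos, one_lt_two⟩, rfl⟩
  have hbs : HasCompactSupport (fun v => (b v : ℂ)) :=
    b.hasCompactSupport.comp_left (g := Complex.ofReal) Complex.ofReal_zero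
  have hbd : ContDiff ℝ (⊤ : ℕ∞) (fun v => (b v : ℂ)) :=
    Complex.ofRealCLM.contDiff.comp b.contDiff
  refine ⟨hbs.toSchwartzMap hbd, hbs, fun v hv => ?_⟩
  have hv1 : b v = 1 := b.one_of_mem_closedBall (by simpa [hb] using hv.le)
  simp [hv1]

/-- The unit ball of a Bernstein space with bounded spectrum is uniformly equicontinuous. -/
theorem MemBernstein.exists_norm_sub_le {Ω : Set V} (hΩ : Bornology.IsBounded Ω) {κ : ℝ}
    (hκ : 0 < κ) :
    ∃ η > 0, ∀ f : V → ℂ, MemBernstein Ω f → ∀ M, (∀ x, ‖f x‖ ≤ M) →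
      ∀ x y, ‖x - y‖ ≤ η → ‖f x - f y‖ ≤ κ * M := by
  obtain ⟨R, hR, hΩR⟩ := hΩ.subset_ball_lt 0 0
  obtain ⟨χ, hχ, hχ1⟩ := SchwartzMap.exists_hasCompactSupport_eq_one (V := V)
  have hlim := SchwartzMap.tendsto_integral_norm_translate_sub (𝓕 χ)
  obtain ⟨δ, hδ, hsmall⟩ := Metric.eventually_nhds_iff_ball.1 (hlim.eventually_le_const hκ)
  refine ⟨R⁻¹ * (δ / 2), by positivity, fun f hf M hM x y hxy => ?_⟩
  have hrep := hf.eq_integral χ hχ hχ1 (inv_pos.2 hR) (by rwa [inv_inv])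
  have hfc := hf.1
  set h : V := R • (x - y)
  have hh : h ∈ ball (0 : V) δ := by
    rw [mem_ball_zero_iff, norm_smul, Real.norm_of_nonneg hR.le]
    calc R * ‖x - y‖ ≤ R * (R⁻¹ * (δ / 2)) := by gcongr
      _ = δ / 2 := by rw [mul_inv_cancel_left₀ hR.ne']
      _ < δ := half_lt_self hδ
  have hx : f x = ∫ z, f (y + R⁻¹ • z) * 𝓕 χ (z - h) := by
    rw [hrep x, ← integral_sub_right_eq_self _ h]
    refine integral_congr_ae (Eventually.of_forall fun z => ?_)
    simp only [h, smul_sub, inv_smul_smul₀ hR.ne']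
    congr 2
    abel
  have hKh : Integrable (fun z => 𝓕 χ (z - h)) := (𝓕 χ).integrable.comp_sub_right h
  have hint : Integrable (fun z => f (y + R⁻¹ • z) * 𝓕 χ (z - h)) :=
    hKh.bdd_mul (c := M) (by fun_prop) (Eventually.of_forall fun _ => hM _)
  have hdiff : f x - f y = ∫ z, f (y + R⁻¹ • z) * (𝓕 χ (z - h) - 𝓕 χ z) := by
    rw [hx, hrep y, ← integral_sub hint (integrable_comp_mul_schwartz hfc hM (𝓕 χ) y R⁻¹)]
    simp only [mul_sub]
  rw [hdiff]
  calc ‖∫ z, f (y + R⁻¹ • z) * (𝓕 χ (z - h) - 𝓕 χ z)‖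
      ≤ ∫ z, M * ‖𝓕 χ (z - h) - 𝓕 χ z‖ := by
        refine norm_integral_le_of_norm_le ((hKh.sub (𝓕 χ).integrable).norm.const_mul M)
          (Eventually.of_forall fun z => ?_)
        rw [norm_mul]
        gcongr
        exact hM _
    _ = M * ∫ z, ‖𝓕 χ (z - h) - 𝓕 χ z‖ := integral_const_mul _ _
    _ ≤ M * κ := by
        have hM0 : 0 ≤ M := (norm_nonneg _).trans (hM 0)
        gcongr
        exact hsmall h hh
    _ = κ * M := mul_comm _ _

/-- Proposition 1: if `P` is a sampling set for `B_Ω`, then there is `η > 0` such that every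
`Λ ⊆ P` with `P ⊆ Λ + B_η(0)` is also a sampling set for `B_Ω`. -/
theorem sampling_set_stable_under_perturbation
    (d : ℕ) (hd : 1 ≤ d)
    (Ω : Set (EuclideanSpace ℝ (Fin d))) (hΩcompact : IsCompact Ω)
    (P : Set (EuclideanSpace ℝ (Fin d))) (hP : IsSamplingSet Ω P) :
    ∃ η > 0, ∀ Λ : Set (EuclideanSpace ℝ (Fin d)), Λ ⊆ P →
      P ⊆ Λ + closedBall (0 : EuclideanSpace ℝ (Fin d)) η → IsSamplingSet Ω Λ := by
  obtain ⟨C, hC, hPC⟩ := hP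
  obtain ⟨η, hη, hequi⟩ := MemBernstein.exists_norm_sub_le hΩcompact.isBounded
    (κ := (2 * C)⁻¹) (by positivity)
  refine ⟨η, hη, fun Λ hΛP hPΛ => ⟨2 * C, by positivity, fun f hf x => ?_⟩⟩
  obtain ⟨B, hB⟩ := hf.2.1
  have hbdd : BddAbove (Set.range fun x => ‖f x‖) := ⟨B, by rintro _ ⟨x, rfl⟩; exact hB x⟩
  set M := ⨆ x, ‖f x‖
  set S := sSup ((fun p => ‖f p‖) '' Λ)
  have hfM : ∀ x, ‖f x‖ ≤ M := le_ciSup hbdd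
  have hM0 : 0 ≤ M := (norm_nonneg _).trans (hfM 0)
  have hS0 : 0 ≤ S := Real.sSup_nonneg (by rintro _ ⟨p, -, rfl⟩; exact norm_nonneg _)
  have hsup : sSup ((fun p => ‖f p‖) '' P) ≤ S + (2 * C)⁻¹ * M := by
    refine Real.sSup_le ?_ (by positivity)
    rintro _ ⟨p, hp, rfl⟩
    obtain ⟨l, hl, e, he, rfl⟩ := Set.mem_add.1 (hPΛ hp)
    have hlS : ‖f l‖ ≤ S :=
      le_csSup (hbdd.mono (Set.image_subset_range _ _)) (Set.mem_image_of_mem _ hl)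
    have hle := hequi f hf M hfM (l + e) l (by simpa using he)
    have htri : ‖f (l + e)‖ ≤ ‖f l‖ + ‖f (l + e) - f l‖ := norm_le_norm_add_norm_sub' _ _
    change ‖f (l + e)‖ ≤ _
    linarith
  have hhalf : M ≤ C * S + M / 2 := by
    refine ciSup_le fun y => (hPC f hf y).trans ?_
    calc C * sSup ((fun p => ‖f p‖) '' P) ≤ C * (S + (2 * C)⁻¹ * M) := by gcongr
      _ = C * S + M / 2 := by field_simp
  linarith [hfM x]
end
end
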